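/- Let R be a complete Noetherian local Cohen–Macaulay normal domain such that every rank-one reflexive R-module whose class in Cl(R) is a torsion element is a maximal Cohen–Macaulay R-module, and suppose M = ⊕_{i=0}^n M_i is a basic R-module giving a semi-steady splitting NCCR of R that is not steady. Then Cl(R) contains a nonzero torsion element if and only if n ≠ 1. -/

import Mathlib

/-!
Writing `S ⊆ Cl(R)` for the finite set of classes of the summands `M i`, semi-steadiness says that
for each `s ∈ S` the translate `S - s` is `S` or `-S`, because `Hom_R(M i, M j)` is divisorial of
class `cl (M j) - cl (M i)` and a divisorial direct summand of a sum of divisorial modules is one of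
them (its endomorphisms are scalars and `R` is local). Steadiness says that `S - s = S` for all
`s ∈ S`. Also `0 ∈ S`, as `M` is a generator.

*No torsion implies `n = 1`* (`eq_one_of_no_torsion`). A translation preserving a finite set has
finite order. Hence if `Cl(R)` has no torsion, `S - s = S` forces `s = 0`, and `S - s = -S = S - t`
forces `s = t`. So `S` has at most two elements, and exactly two because `M` is not steady.

*`n = 1` implies no torsion.* Now `S = {0, σ}`. Let `Λ = End_R(M)`; it has finite global dimension
`d = dim R`.

* The elements of `S` generate `Cl(R)` (`cl_mem_of_globalDim`). Choose `z` with `M z ≅ R`. For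
  divisorial `X`, the `Λ`-module `Hom_R(X, M)` has a finite projective resolution. Applying the exact
  functor "corner at the projector onto `M z`" gives a finite resolution of `Hom_R(X, R)` by direct
  summands of sums of modules `Hom_R(M j, R)`. The first Chern class `chernClass`, the divisor class
  of the ideal of maximal minors of a torsion-free module embedded in a vector space, is additive on
  short exact sequences, and equals `cl` on divisorial modules. So `cl X` is in the subgroup
  generated by `S`. Additivity is verified over the valuation rings of which the normal domain `R` is
  the intersection.
* Therefore `Cl(R)` is generated by `σ`. If it has a nonzero torsion element, then `Cl(R)` is a
  torsion group, and by hypothesis every divisorial module is maximal Cohen-Macaulay. For divisorial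
  `X` the `Λ`-module `Hom_R(X, M)` then has depth `d`, and the Auslander-Buchsbaum inequality
  (`pd_of_depth`) shows that it is projective. Looking at corners again, `X` has the class of some
  `M j` (`exists_cl_eq_of_isMCM`). So `S = Cl(R)` is a group and `M` is steady, a contradiction.
-/

/- ## Preliminary definitions -/

open Module TensorProduct CategoryTheory

universe u

section Defs

variable (R : Type u) [CommRing R]

/-- `N ∈ add_R M` : `N` is isomorphic to a direct summand of a finite direct sum of
copies of `M`. -/
def MemAdd (M N : Type u) [AddCommGroup M] [Module R M] [AddCommGroup N] [Module R N] : Prop :=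
  ∃ (k : ℕ) (P : ModuleCat.{u} R), Nonempty ((N × P) ≃ₗ[R] (Fin k → M))

/-- `M` is a generator, i.e. `R ∈ add_R M`. -/
def IsGeneratorModule (M : Type u) [AddCommGroup M] [Module R M] : Prop := MemAdd R M R

/-- `M` is an indecomposable module: it is nonzero and admits no nontrivial
direct sum decomposition. -/
def IsIndecomposableModule (M : Type u) [AddCommGroup M] [Module R M] : Prop :=
  Nontrivial M ∧ ∀ A B : Submodule R M, IsCompl A B → A = ⊥ ∨ B = ⊥

/-- `M` is steady : `M` is a generator and `End_R(M) ∈ add_R M`. -/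
def IsSteadyModule (M : Type u) [AddCommGroup M] [Module R M] : Prop :=
  IsGeneratorModule R M ∧ MemAdd R M (Module.End R M)

/-- The family `(M i)` (the indecomposable decomposition of `M = ⊕ i, M i`) is semi-steady:
`M` is a generator and, for each `i`, `Hom_R(M i, M) ∈ add_R M` or
`Hom_R(M i, M) ∈ add_R M^*`. -/
def IsSemiSteadyFamily {m : ℕ} (M : Fin m → Type u) [∀ i, AddCommGroup (M i)]
    [∀ i, Module R (M i)] : Prop :=
  IsGeneratorModule R (∀ j, M j) ∧
  ∀ i, MemAdd R (∀ j, M j) (M i →ₗ[R] ∀ j, M j) ∨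
       MemAdd R (Module.Dual R (∀ j, M j)) (M i →ₗ[R] ∀ j, M j)

/-- `M` has rank one: after tensoring with the fraction field of `R`, it becomes
one-dimensional. -/
def HasRankOne (M : Type u) [AddCommGroup M] [Module R M] : Prop :=
  Module.finrank (FractionRing R) (FractionRing R ⊗[R] M) = 1

/-- A divisorial module: a finitely generated rank-one reflexive module. -/
def IsDivisorialModule (M : Type u) [AddCommGroup M] [Module R M] : Prop :=
  Module.Finite R M ∧ Module.IsReflexive R M ∧ HasRankOne R M

/-- The depth of a module over a (local) ring, defined as
`inf { i | Ext^i_R(R/m, M) ≠ 0 }`. -/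
noncomputable def moduleDepth (hR : IsLocalRing R) (M : Type u) [AddCommGroup M]
    [Module R M] : ℕ∞ :=
  letI := hR
  sInf {i : ℕ∞ | ∃ k : ℕ, i = (k : ℕ∞) ∧
    ¬ Subsingleton ↥(((Ext R (ModuleCat.{u} R) k).obj
        (Opposite.op (ModuleCat.of R (IsLocalRing.ResidueField R)))).obj (ModuleCat.of R M))}

/-- `M` is a maximal Cohen-Macaulay module over the local ring `R`:
its depth equals (i.e. is at least) the Krull dimension of `R`. -/
def IsMCM (M : Type u) [AddCommGroup M] [Module R M] : Prop :=
  ∀ hR : IsLocalRing R, ringKrullDim R ≤ (moduleDepth R hR M : WithBot ℕ∞)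

end Defs

section GlobalDim

variable (Λ : Type u) [Ring Λ]

/-- The global dimension of the ring `Λ` is at most `d`, expressed via vanishing of
`Ext^{d+1}` on the category of `Λ`-modules. -/
def GlobalDimLE (d : ℕ) : Prop :=
  ∀ M N : ModuleCat.{u} Λ,
    Subsingleton ↥(((Ext ℤ (ModuleCat.{u} Λ) (d + 1)).obj (Opposite.op M)).obj N)

/-- The global dimension of the ring `Λ`. -/
noncomputable def globalDim : ℕ∞ :=
  sInf {d : ℕ∞ | ∃ k : ℕ, d = (k : ℕ∞) ∧ GlobalDimLE Λ k}

end GlobalDim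

section Order

variable (R : Type u) [CommRing R]

/-- `Λ` is a non-singular `R`-order: `Λ` is a module-finite `R`-algebra which is
maximal Cohen-Macaulay as an `R`-module, and `gl.dim Λ_p = dim R_p` for every
prime `p` of `R`. -/
def IsNonsingularOrder (Λ : Type u) [Ring Λ] [Algebra R Λ] : Prop :=
  Module.Finite R Λ ∧ IsMCM R Λ ∧
  ∀ p : PrimeSpectrum R,
    (globalDim (Localization.AtPrime p.asIdeal ⊗[R] Λ) : WithBot ℕ∞) =
      ringKrullDim (Localization.AtPrime p.asIdeal)

/-- The nonzero finitely generated reflexive module `M` gives a non-commutative crepant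
resolution (NCCR) of `R`, i.e. `End_R(M)` is a non-singular `R`-order. -/
def GivesNCCR (M : Type u) [AddCommGroup M] [Module R M] : Prop :=
  Module.Finite R M ∧ Module.IsReflexive R M ∧ Nontrivial M ∧
  IsNonsingularOrder R (Module.End R M)

end Order

section ClassGroup

variable (R : Type u) [CommRing R] [IsDomain R]

/-- Data exhibiting the abelian group `Cl` as the divisor class group of the normal
domain `R`: `cl` assigns to each divisorial (rank-one reflexive) module its class,
two divisorial modules have the same class iff they are isomorphic, every class comes
from a divisorial module, the class of `R` is zero, and the class of the divisorial
product `(M ⊗ N)^{**}` is the sum of the classes. -/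
structure DivisorClassGroupData (Cl : Type u) [AddCommGroup Cl] where
  cl : ModuleCat.{u} R → Cl
  cl_surjective : ∀ c : Cl, ∃ M : ModuleCat.{u} R, IsDivisorialModule R ↥M ∧ cl M = c
  cl_eq_iff : ∀ M N : ModuleCat.{u} R, IsDivisorialModule R ↥M → IsDivisorialModule R ↥N →
    (cl M = cl N ↔ Nonempty (↥M ≃ₗ[R] ↥N))
  cl_ring : cl (ModuleCat.of R R) = 0
  cl_add : ∀ M N : ModuleCat.{u} R, IsDivisorialModule R ↥M → IsDivisorialModule R ↥N →
    cl M + cl N = cl (ModuleCat.of R (Module.Dual R (Module.Dual R (↥M ⊗[R] ↥N))))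

end ClassGroup

/-! ### Two versions of `Ext`, and depth -/

section bridge
universe v w w'
variable {C : Type v} [Category.{w} C] [Abelian C] [EnoughProjectives C] [HasExt.{w'} C]

/-- The derived functor `Ext A C n` and the Yoneda group `Abelian.Ext` are both computed by a
projective resolution of `X`, so vanishing passes from the former to the latter. -/
theorem subsingleton_abelianExt (A : Type*) [Ring A] [Linear A C] {X Y : C} {n : ℕ}
    (h : Subsingleton ↥(((Ext A C n).obj (Opposite.op X)).obj Y)) :
    Subsingleton (Abelian.Ext.{w'} X Y n) := by
  let P := ProjectiveResolution.of X
  have hz : Limits.IsZero ((P.complex.linearYonedaObj A Y).homology n) := by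
    have := ModuleCat.isZero_of_subsingleton (((Ext A C n).obj (Opposite.op X)).obj Y)
    exact this.of_iso (P.isoExt n Y).symm
  rw [← HomologicalComplex.exactAt_iff_isZero_homology] at hz
  have key : ∀ e : Abelian.Ext.{w'} X Y n, e = 0 := by
    intro e
    obtain ⟨f, hf, rfl⟩ := P.extMk_surjective e (n + 1) rfl
    cases n with
    | zero =>
      rw [HomologicalComplex.exactAt_iff' _ 0 0 1 (by simp) (by simp)] at hz
      rw [ShortComplex.moduleCat_exact_iff] at hz
      obtain ⟨g, hg⟩ := hz f hf
      have : f = 0 := by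
        rw [← hg]
        change (P.complex.d 0 0 ≫ (show P.complex.X 0 ⟶ Y from g)) = 0
        rw [P.complex.shape 0 0 (by simp)]
        exact Limits.zero_comp
      subst this
      simp
    | succ p =>
      rw [HomologicalComplex.exactAt_iff' _ p (p+1) (p+2) (by simp) (by simp)] at hz
      rw [ShortComplex.moduleCat_exact_iff] at hz
      obtain ⟨g, hg⟩ := hz f hf
      rw [P.extMk_eq_zero_iff f _ rfl hf p rfl]
      exact ⟨g, hg⟩
  exact ⟨fun a b => by rw [key a, key b]⟩
end bridge

/-- A maximal Cohen-Macaulay module has no `Ext` from the residue field below degree `dim R`.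
The zero module satisfies `IsMCM` (its depth is `⊤`) and the conclusion as well. -/
theorem IsMCM.subsingleton_ext {R : Type u} [CommRing R] [IsLocalRing R] {N : Type u}
    [AddCommGroup N] [Module R N] (h : IsMCM R N) (i : ℕ) (hi : (i : WithBot ℕ∞) < ringKrullDim R) :
    Subsingleton (Abelian.Ext.{u} (ModuleCat.of R (IsLocalRing.ResidueField R))
      (ModuleCat.of R N) i) := by
  apply subsingleton_abelianExt R
  by_contra hc
  have h1 := h inferInstance
  have h2 : moduleDepth R inferInstance N ≤ (i : ℕ∞) := sInf_le ⟨i, rfl, hc⟩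
  have h3 : ringKrullDim R ≤ ((i : ℕ∞) : WithBot ℕ∞) := h1.trans (by exact_mod_cast h2)
  exact absurd (lt_of_lt_of_le hi h3) (lt_irrefl _)

theorem hasProjectiveDimensionLT_of_globalDimLE {Λ : Type u} [Ring Λ] {d : ℕ}
    (h : GlobalDimLE Λ d) (X : ModuleCat.{u} Λ) : HasProjectiveDimensionLT X (d + 1) :=
  hasProjectiveDimensionLT_of_enoughInjectives.{u} X (d + 1)
    fun Y => subsingleton_abelianExt ℤ (h X Y)

/-! ### The Auslander-Buchsbaum inequality over a module-finite algebra -/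

section AB

theorem shortExact_ofHom {Λ : Type u} [Ring Λ] {A B C : Type u} [AddCommGroup A] [AddCommGroup B]
    [AddCommGroup C] [Module Λ A] [Module Λ B] [Module Λ C] (f : A →ₗ[Λ] B) (g : B →ₗ[Λ] C)
    (hf : Function.Injective f) (hg : Function.Surjective g) (h : Function.Exact f g) :
    (ShortComplex.mk (ModuleCat.ofHom f) (ModuleCat.ofHom g)
      (ModuleCat.hom_ext h.linearMap_comp_eq_zero)).ShortExact where
  exact := (ShortComplex.ShortExact.moduleCat_exact_iff_function_exact _).mpr h
  mono_f := (ModuleCat.mono_iff_injective _).mpr hf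
  epi_g := (ModuleCat.epi_iff_surjective _).mpr hg

variable {R Λ : Type u} [CommRing R] [IsLocalRing R] [Ring Λ] [Algebra R Λ]

/-- Multiplication by a central scalar `x : R` as a `Λ`-linear endomorphism. -/
abbrev mulBy (Λ : Type u) [Ring Λ] [Algebra R Λ] (Y : Type u) [AddCommGroup Y] [Module R Y]
    [Module Λ Y] [IsScalarTower R Λ Y] (x : R) : Y →ₗ[Λ] Y :=
  DistribSMul.toLinearMap Λ Y x

variable [IsNoetherianRing R] [Module.Finite R Λ]

/-- If `x` is regular on `Y` and `Y / xY` has projective dimension at most one over `Λ`, then `Y` is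
projective. Write `0 → K → F → Y → 0` with `F` free. The kernel `K + xF` of `F → Y / xY` is
projective, so the surjection `K × F → K + xF`, `(k, f) ↦ k + xf`, has a section. The resulting
projector onto its kernel yields a map `b : F → K` congruent to the identity modulo `x` on `K`. By
Nakayama `b` is invertible on `K`, so `K` is a direct summand of `F`. -/
theorem projective_of_quot_regular {Y : Type u} [AddCommGroup Y] [Module R Y] [Module Λ Y]
    [IsScalarTower R Λ Y] [Module.Finite R Y] {x : R} (hx : x ∈ IsLocalRing.maximalIdeal R)
    (hreg : IsSMulRegular Y x)
    (hpd : HasProjectiveDimensionLT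
      (ModuleCat.of Λ (Y ⧸ LinearMap.range (mulBy Λ Y x))) 2) : Module.Projective Λ Y := by
  have : Module.Finite Λ Y := Module.Finite.of_restrictScalars_finite R Λ Y
  obtain ⟨a, π, hπ⟩ := Module.Finite.exists_fin' Λ Y
  set K := LinearMap.ker π with hK
  let q : (Fin a → Λ) →ₗ[Λ] (Y ⧸ LinearMap.range (mulBy Λ Y x)) :=
    (LinearMap.range (mulBy Λ Y x)).mkQ ∘ₗ π
  have hq : Function.Surjective q := (Submodule.mkQ_surjective _).comp hπ
  have hT : Module.Projective Λ (LinearMap.ker q) := by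
    rw [IsProjective.iff_projective, projective_iff_hasProjectiveDimensionLT_one]
    exact ((LinearMap.shortExact_shortComplexKer hq).hasProjectiveDimensionLT_X₃_iff 0
      (by
        change Projective (ModuleCat.of Λ (Fin a → Λ))
        rw [← IsProjective.iff_projective]; infer_instance)).1 hpd
  have hmem : ∀ z : K × (Fin a → Λ), (z.1 : Fin a → Λ) + x • z.2 ∈ LinearMap.ker q := by
    intro z
    simp only [LinearMap.mem_ker, q, LinearMap.comp_apply, map_add]
    rw [LinearMap.mem_ker.1 z.1.2, map_zero, zero_add, Submodule.mkQ_apply,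
      Submodule.Quotient.mk_eq_zero]
    exact ⟨π z.2, by simp⟩
  let s : (K × (Fin a → Λ)) →ₗ[Λ] LinearMap.ker q :=
    LinearMap.codRestrict _ (K.subtype ∘ₗ LinearMap.fst Λ _ _ +
      mulBy Λ (Fin a → Λ) x ∘ₗ LinearMap.snd Λ _ _) hmem
  have hs_apply : ∀ z, ((s z : LinearMap.ker q) : Fin a → Λ) = (z.1 : Fin a → Λ) + x • z.2 :=
    fun z => rfl
  have hs : Function.Surjective s := by
    rintro ⟨t, ht⟩
    have : π t ∈ LinearMap.range (mulBy Λ Y x) := by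
      simpa [q] using ht
    obtain ⟨y, hy⟩ := this
    obtain ⟨f, rfl⟩ := hπ y
    refine ⟨(⟨t - x • f, ?_⟩, f), ?_⟩
    · rw [hK, LinearMap.mem_ker, map_sub, ← hy]; simp
    · ext1; rw [hs_apply]; simp
  obtain ⟨σ, hσ⟩ := Module.projective_lifting_property s LinearMap.id hs
  -- the second component of an element of `ker s` lies in `K`
  have hker : ∀ z, s z = 0 → z.2 ∈ K := by
    intro z hz
    have h1 := hs_apply z
    rw [hz] at h1
    have h2 := congrArg π h1
    rw [map_add, LinearMap.mem_ker.1 z.1.2] at h2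
    simp only [ZeroMemClass.coe_zero, map_zero, zero_add] at h2
    refine LinearMap.mem_ker.2 (hreg ?_)
    simp only [smul_zero]
    rw [h2]; simp
  have hσs : ∀ w, s (σ w) = w := fun w => LinearMap.congr_fun hσ w
  let τ : (K × (Fin a → Λ)) →ₗ[Λ] (K × (Fin a → Λ)) := LinearMap.id - σ ∘ₗ s
  have hτ : ∀ z, s (τ z) = 0 := by
    intro z; simp [τ, hσs]
  let r : (K × (Fin a → Λ)) →ₗ[Λ] K :=
    LinearMap.codRestrict K (LinearMap.snd Λ _ _ ∘ₗ τ) fun z => hker (τ z) (hτ z)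
  have hr : ∀ k : K, r (-(x • k), (k : Fin a → Λ)) = k := by
    intro k
    have : s (-(x • k), (k : Fin a → Λ)) = 0 := by
      ext1; rw [hs_apply]; simp
    ext1
    change (τ (-(x • k), (k : Fin a → Λ))).2 = _
    simp only [τ, LinearMap.sub_apply, LinearMap.comp_apply, this, LinearMap.id_apply,
      map_zero, sub_zero]
  let b : (Fin a → Λ) →ₗ[Λ] K := r ∘ₗ LinearMap.inr Λ _ _
  let φ : K →ₗ[Λ] K := b ∘ₗ K.subtype
  have hφ : ∀ k, φ k = k + x • r (k, 0) := by
    intro k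
    have h1 : r (-(x • k), (k : Fin a → Λ)) = φ k - x • r (k, 0) := by
      have : ((-(x • k), (k : Fin a → Λ)) : K × (Fin a → Λ)) =
        (0, (k : Fin a → Λ)) - mulBy Λ _ x (k, 0) := by ext <;> simp
      rw [this, map_sub]
      have h3 : r (mulBy Λ _ x (k, 0)) = x • r (k, 0) :=
        LinearMap.map_smul_of_tower r x (k, 0)
      rw [h3]; rfl
    rw [hr k] at h1
    exact (sub_eq_iff_eq_add.1 h1.symm)
  have : IsNoetherian R (Fin a → Λ) := inferInstance
  have hfinK : Module.Finite R K :=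
    (inferInstance : Module.Finite R (K.restrictScalars R))
  have hNoe : IsNoetherian R K := isNoetherian_of_isNoetherianRing_of_finite R K
  have hφs : Function.Surjective φ := by
    have h1 : (⊤ : Submodule R K) ≤ LinearMap.range (φ.restrictScalars R) ⊔
        IsLocalRing.maximalIdeal R • (⊤ : Submodule R K) := by
      intro k _
      have h2 : k = φ k + -(x • r (k, 0)) := by rw [hφ]; abel
      rw [h2]
      exact Submodule.add_mem_sup ⟨k, rfl⟩
        (neg_mem (Submodule.smul_mem_smul hx trivial))
    have h2 := Submodule.le_of_le_smul_of_le_jacobson_bot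
      (IsNoetherian.noetherian (⊤ : Submodule R K)) (IsLocalRing.maximalIdeal_le_jacobson ⊥) h1
    intro k
    obtain ⟨k', hk'⟩ := h2 (trivial : k ∈ (⊤ : Submodule R K))
    exact ⟨k', hk'⟩
  have hφb : Function.Bijective φ :=
    ⟨IsNoetherian.injective_of_surjective_endomorphism (φ.restrictScalars R) hφs, hφs⟩
  let e := LinearEquiv.ofBijective φ hφb
  let ρ : (Fin a → Λ) →ₗ[Λ] K := e.symm.toLinearMap ∘ₗ b
  have hρ : ρ ∘ₗ K.subtype = LinearMap.id := by
    ext1 k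
    change e.symm (φ k) = k
    exact e.symm_apply_apply k
  have hex : Function.Exact K.subtype π := by
    rw [LinearMap.exact_iff]; simp [hK]
  have hspl : Function.Injective K.subtype ∧ ∃ l, π ∘ₗ l = LinearMap.id :=
    ((hex.split_tfae').out 1 0 rfl rfl).1 ⟨hπ, ρ, hρ⟩
  obtain ⟨-, l, hl⟩ := hspl
  exact Module.Projective.of_split l π hl

/-- Killing a regular element raises the projective dimension by one: if `Y / xY` has projective
dimension at most `p + 1`, then `Y` has projective dimension at most `p`. The case `p = 0` is
`projective_of_quot_regular`, and a syzygy of `Y` reduces `p + 1` to `p`. -/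
theorem pd_of_quot_regular (hΛ : ∀ x : R, x ≠ 0 → IsSMulRegular Λ x) (p : ℕ)
    {Y : Type u} [AddCommGroup Y] [Module R Y] [Module Λ Y]
    [IsScalarTower R Λ Y] [Module.Finite R Y] {x : R} (hx : x ∈ IsLocalRing.maximalIdeal R)
    (hx0 : x ≠ 0) (hreg : IsSMulRegular Y x)
    (hpd : HasProjectiveDimensionLT
      (ModuleCat.of Λ (Y ⧸ LinearMap.range (mulBy Λ Y x))) (p + 2)) :
    HasProjectiveDimensionLT (ModuleCat.of Λ Y) (p + 1) := by
  induction p generalizing Y with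
  | zero =>
    have := projective_of_quot_regular hx hreg hpd
    rw [IsProjective.iff_projective, projective_iff_hasProjectiveDimensionLT_one] at this
    exact this
  | succ p ih =>
    have : Module.Finite Λ Y := Module.Finite.of_restrictScalars_finite R Λ Y
    obtain ⟨a, π, hπ⟩ := Module.Finite.exists_fin' Λ Y
    set K := LinearMap.ker π with hK
    have hproj : Projective (ModuleCat.of Λ (Fin a → Λ)) := by
      rw [← IsProjective.iff_projective]; infer_instance
    have : IsNoetherian R (Fin a → Λ) := inferInstance
    have hfinK : Module.Finite R K :=
      (inferInstance : Module.Finite R (K.restrictScalars R))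
    have hregF : IsSMulRegular (Fin a → Λ) x := by
      intro u v huv
      funext i
      exact hΛ x hx0 (congrFun huv i)
    have hregK : IsSMulRegular K x := by
      intro u v huv
      ext1
      exact hregF (congrArg Subtype.val huv)
    refine ((LinearMap.shortExact_shortComplexKer hπ).hasProjectiveDimensionLT_X₃_iff p hproj).2
      (ih hregK ?_)
    -- `0 → F → F → F/xF → 0`
    have hFx : HasProjectiveDimensionLT
        (ModuleCat.of Λ ((Fin a → Λ) ⧸ LinearMap.range (mulBy Λ (Fin a → Λ) x))) 2 :=
      ((shortExact_ofHom (mulBy Λ (Fin a → Λ) x)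
        (LinearMap.range (mulBy Λ (Fin a → Λ) x)).mkQ hregF (Submodule.mkQ_surjective _)
        (by rw [LinearMap.exact_iff]; simp)).hasProjectiveDimensionLT_X₃_iff 0 hproj).2
        (by rw [zero_add, ← projective_iff_hasProjectiveDimensionLT_one]; exact hproj)
    have hFx' := hasProjectiveDimensionLT_of_ge
      (ModuleCat.of Λ ((Fin a → Λ) ⧸ LinearMap.range (mulBy Λ (Fin a → Λ) x))) 2 (p + 2)
      (by omega)
    let f : (K ⧸ LinearMap.range (mulBy Λ K x)) →ₗ[Λ]
        ((Fin a → Λ) ⧸ LinearMap.range (mulBy Λ (Fin a → Λ) x)) :=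
      Submodule.mapQ _ _ K.subtype (by
        rintro _ ⟨k, rfl⟩
        exact ⟨k, rfl⟩)
    let g : ((Fin a → Λ) ⧸ LinearMap.range (mulBy Λ (Fin a → Λ) x)) →ₗ[Λ]
        (Y ⧸ LinearMap.range (mulBy Λ Y x)) :=
      Submodule.mapQ _ _ π (by
        rintro _ ⟨k, rfl⟩
        exact ⟨π k, by simp⟩)
    have hf : Function.Injective f := by
      rw [injective_iff_map_eq_zero]
      intro z hz
      obtain ⟨k, rfl⟩ := Submodule.Quotient.mk_surjective _ z
      have h1 : (k : Fin a → Λ) ∈ LinearMap.range (mulBy Λ (Fin a → Λ) x) := by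
        simpa [f] using hz
      obtain ⟨w, hw⟩ := h1
      have hwK : w ∈ K := by
        rw [hK, LinearMap.mem_ker]
        apply hreg
        have := congrArg π hw
        rw [LinearMap.mem_ker.1 k.2] at this
        simpa using this
      rw [Submodule.Quotient.mk_eq_zero]
      exact ⟨⟨w, hwK⟩, by ext1; exact hw⟩
    have hg : Function.Surjective g := by
      intro z
      obtain ⟨y, rfl⟩ := Submodule.Quotient.mk_surjective _ z
      obtain ⟨w, rfl⟩ := hπ y
      exact ⟨Submodule.Quotient.mk w, rfl⟩
    have hfg : Function.Exact f g := by
      intro z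
      constructor
      · intro hz
        obtain ⟨w, rfl⟩ := Submodule.Quotient.mk_surjective _ z
        have h1 : π w ∈ LinearMap.range (mulBy Λ Y x) := by
          simpa [g] using hz
        obtain ⟨y, hy⟩ := h1
        obtain ⟨v, rfl⟩ := hπ y
        refine ⟨Submodule.Quotient.mk ⟨w - x • v, ?_⟩, ?_⟩
        · rw [hK, LinearMap.mem_ker, map_sub, ← hy]; simp
        · simp only [f, Submodule.mapQ_apply]
          rw [Submodule.Quotient.eq]
          exact ⟨-v, by simp⟩
      · rintro ⟨k, rfl⟩
        obtain ⟨k, rfl⟩ := Submodule.Quotient.mk_surjective _ k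
        simp only [f, g, Submodule.mapQ_apply]
        rw [Submodule.subtype_apply, LinearMap.mem_ker.1 k.2, Submodule.Quotient.mk_zero]
    exact (shortExact_ofHom f g hf hg hfg).hasProjectiveDimensionLT_X₁ (p + 2) hFx' hpd

end AB

section C

theorem subsingleton_ext_prod {R : Type u} [CommRing R] (X : ModuleCat.{u} R) (i : ℕ)
    {A B C : Type u} [AddCommGroup A] [Module R A] [AddCommGroup B] [Module R B]
    [AddCommGroup C] [Module R C] (e : C ≃ₗ[R] A × B)
    (hA : Subsingleton (Abelian.Ext.{u} X (ModuleCat.of R A) i))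
    (hB : Subsingleton (Abelian.Ext.{u} X (ModuleCat.of R B) i)) :
    Subsingleton (Abelian.Ext.{u} X (ModuleCat.of R C) i) := by
  have hS := shortExact_ofHom (e.symm.toLinearMap ∘ₗ LinearMap.inl R A B)
    (LinearMap.snd R A B ∘ₗ e.toLinearMap)
    (e.symm.injective.comp (LinearMap.inl_injective (R := R)))
    ((LinearMap.snd_surjective (R := R)).comp e.surjective) (by
      intro c
      constructor
      · intro hc
        refine ⟨(e c).1, ?_⟩
        have : (e c).2 = 0 := hc
        simp only [LinearMap.comp_apply, LinearEquiv.coe_coe, LinearMap.inl_apply]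
        rw [LinearEquiv.symm_apply_eq]
        exact Prod.ext rfl this.symm
      · rintro ⟨a, rfl⟩
        simp)
  have key : ∀ x : Abelian.Ext.{u} X (ModuleCat.of R C) i, x = 0 := by
    intro x
    obtain ⟨y, rfl⟩ := Abelian.Ext.covariant_sequence_exact₂ X hS x (Subsingleton.elim _ _)
    rw [Subsingleton.elim y 0]
    simp
  exact ⟨fun a b => by rw [key a, key b]⟩

/-- `Ext` into a finite product vanishes when `Ext` into each factor does. -/
theorem subsingleton_ext_pi {R : Type u} [CommRing R] (X : ModuleCat.{u} R) (i : ℕ) (m : ℕ)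
    (A : Fin m → Type u) [∀ j, AddCommGroup (A j)] [∀ j, Module R (A j)]
    (hA : ∀ j, Subsingleton (Abelian.Ext.{u} X (ModuleCat.of R (A j)) i)) :
    Subsingleton (Abelian.Ext.{u} X (ModuleCat.of R (∀ j, A j)) i) := by
  induction m with
  | zero =>
    have hz := ModuleCat.isZero_of_subsingleton (ModuleCat.of R (∀ j, A j))
    have key : ∀ x : Abelian.Ext.{u} X (ModuleCat.of R (∀ j, A j)) i, x = 0 := by
      intro x
      rw [← x.comp_mk₀_id, (Limits.IsZero.iff_id_eq_zero _).1 hz]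
      simp
    exact ⟨fun a b => by rw [key a, key b]⟩
  | succ m ih =>
    exact subsingleton_ext_prod X i (Fin.consLinearEquiv R A).symm (hA 0) (ih _ fun j => hA j.succ)

variable {R Λ : Type u} [CommRing R] [IsLocalRing R] [Ring Λ] [Algebra R Λ]
  [IsNoetherianRing R] [Module.Finite R Λ]

/-- Auslander-Buchsbaum type estimate: a module of depth at least `t` over `R` has projective
dimension at most `p` over `Λ` as soon as `Λ` has global dimension at most `t + p`. -/
theorem pd_of_depth (hΛ : ∀ x : R, x ≠ 0 → IsSMulRegular Λ x) (t : ℕ) (p : ℕ)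
    (hgl : ∀ Z : ModuleCat.{u} Λ, HasProjectiveDimensionLT Z (t + p + 1))
    {Y : Type u} [AddCommGroup Y] [Module R Y] [Module Λ Y]
    [IsScalarTower R Λ Y] [Module.Finite R Y]
    (hY : ∀ i < t, Subsingleton (Abelian.Ext.{u}
      (ModuleCat.of R (IsLocalRing.ResidueField R)) (ModuleCat.of R Y) i)) :
    HasProjectiveDimensionLT (ModuleCat.of Λ Y) (p + 1) := by
  induction t generalizing Y p with
  | zero => simpa using hgl (ModuleCat.of Λ Y)
  | succ t ih =>
    have h0 := hY 0 (by omega)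
    have h1 : Subsingleton (IsLocalRing.ResidueField R →ₗ[R] Y) :=
      ((Abelian.Ext.addEquiv₀ (X := ModuleCat.of R (IsLocalRing.ResidueField R))
        (Y := ModuleCat.of R Y)).trans ModuleCat.homAddEquiv).symm.toEquiv.subsingleton
    obtain ⟨x, hx, hreg⟩ := IsSMulRegular.subsingleton_linearMap_iff.1 h1
    have hxm : x ∈ IsLocalRing.maximalIdeal R := by
      have : x • (1 : IsLocalRing.ResidueField R) = 0 := Module.mem_annihilator.1 hx 1
      rw [Algebra.smul_def, mul_one] at this
      exact (IsLocalRing.residue_eq_zero_iff x).1 this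
    by_cases hx0 : x = 0
    · subst hx0
      have hsub : Subsingleton Y := ⟨fun a b => hreg (by simp)⟩
      have := (ModuleCat.isZero_of_subsingleton (ModuleCat.of Λ Y)).hasProjectiveDimensionLT_zero
      exact hasProjectiveDimensionLT_of_ge _ 0 _ (by omega)
    · let Q : Submodule Λ Y := LinearMap.range (mulBy Λ Y x)
      let π : Y →ₗ[R] Y ⧸ Q := Q.mkQ.restrictScalars R
      have hπ : Function.Surjective π := Submodule.Quotient.mk_surjective Q
      have hfin : Module.Finite R (Y ⧸ Q) := Module.Finite.of_surjective π hπ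
      have hgl' : ∀ Z : ModuleCat.{u} Λ, HasProjectiveDimensionLT Z (t + (p + 1) + 1) := by
        intro Z
        rw [show t + (p + 1) + 1 = t + 1 + p + 1 by omega]
        exact hgl Z
      refine pd_of_quot_regular hΛ p hxm hx0 hreg
        (ih (Y := Y ⧸ Q) (p + 1) hgl' ?_)
      intro i hi
      have hS := shortExact_ofHom ((mulBy Λ Y x).restrictScalars R)
        π hreg hπ
        (by
          have : Function.Exact (mulBy Λ Y x) Q.mkQ := by
            rw [LinearMap.exact_iff]; simp [Q]
          exact this)
      have e1 := hY i (by omega)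
      have e2 := hY (i + 1) (by omega)
      have key : ∀ z : Abelian.Ext.{u} (ModuleCat.of R (IsLocalRing.ResidueField R))
          (ModuleCat.of R (Y ⧸ Q)) i, z = 0 := by
        intro z
        obtain ⟨y, rfl⟩ := Abelian.Ext.covariant_sequence_exact₃ _ hS z rfl
          (Subsingleton.elim _ _)
        rw [Subsingleton.elim y 0]
        simp
      exact ⟨fun a b => by rw [key a, key b]⟩

end C

/-! ### Global dimension of a non-singular order -/

section C2

/-- A bound for the global dimension is transported along a ring isomorphism. -/
theorem pdLT_of_ringEquiv {Λ Γ : Type u} [Ring Λ] [Ring Γ] (e : Γ ≃+* Λ) (d : ℕ)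
    (h : ∀ Z : ModuleCat.{u} Γ, HasProjectiveDimensionLT Z (d + 1)) (Z : ModuleCat.{u} Λ) :
    HasProjectiveDimensionLT Z (d + 1) := by
  let _ : Module Γ Z := Module.compHom Z (e : Γ →+* Λ)
  have := RingHomInvPair.of_ringEquiv e
  have := RingHomInvPair.symm (RingHomClass.toRingHom e) (e.symm : Λ →+* Γ)
  let e' : (ModuleCat.of Γ Z) ≃ₛₗ[RingHomClass.toRingHom e] Z :=
    { toFun := fun z => z
      invFun := fun z => z
      left_inv := fun z => rfl
      right_inv := fun z => rfl
      map_add' := fun _ _ => rfl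
      map_smul' := fun _ _ => rfl }
  have : HasProjectiveDimensionLE (ModuleCat.of Γ Z) d := h _
  exact ModuleCat.hasProjectiveDimensionLE_of_semiLinearEquiv e e' d

/-- A non-singular order over a local ring has finite global dimension, equal to `dim R`. -/
theorem IsNonsingularOrder.pdLT {R Λ : Type u} [CommRing R] [IsLocalRing R] [Ring Λ] [Algebra R Λ]
    [IsNoetherianRing R] (h : IsNonsingularOrder R Λ) :
    ∃ d : ℕ, ringKrullDim R = d ∧ ∀ Z : ModuleCat.{u} Λ, HasProjectiveDimensionLT Z (d + 1) := by
  let p : PrimeSpectrum R := ⟨IsLocalRing.maximalIdeal R, inferInstance⟩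
  have hp := h.2.2 p
  let eR : R ≃ₐ[R] Localization.AtPrime p.asIdeal :=
    IsLocalization.atUnits R p.asIdeal.primeCompl (by
      intro x hx
      by_contra hc
      exact hx ((IsLocalRing.mem_maximalIdeal x).2 hc))
  rw [← ringKrullDim_eq_of_ringEquiv eR.toRingEquiv] at hp
  have hfin : globalDim (Localization.AtPrime p.asIdeal ⊗[R] Λ) ≠ ⊤ := by
    intro ht
    rw [ht] at hp
    exact ringKrullDim_ne_top (R := R) hp.symm
  obtain ⟨d, hd⟩ := ENat.ne_top_iff_exists.1 hfin
  refine ⟨d, by rw [← hp, ← hd]; rfl, ?_⟩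
  have hne : {d : ℕ∞ | ∃ k : ℕ, d = (k : ℕ∞) ∧
      GlobalDimLE (Localization.AtPrime p.asIdeal ⊗[R] Λ) k}.Nonempty := by
    by_contra hc
    rw [Set.not_nonempty_iff_eq_empty] at hc
    apply hfin
    rw [globalDim, hc, sInf_empty]
  obtain ⟨k, hk, hgl⟩ := csInf_mem hne
  have hkd : k = d := by
    have : (d : ℕ∞) = k := hd.trans hk
    exact_mod_cast this.symm
  subst hkd
  exact pdLT_of_ringEquiv
    ((Algebra.TensorProduct.congr eR.symm AlgEquiv.refl).trans
      (Algebra.TensorProduct.lid R Λ)).toRingEquiv k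
    (fun Z => hasProjectiveDimensionLT_of_globalDimLE hgl Z)

end C2

/-! ### Fractional ideals and divisor classes -/

section FracIdeal

set_option linter.unusedSectionVars false

variable {R K : Type u} [CommRing R] [IsDomain R] [Field K] [Algebra R K] [IsFractionRing R K]

/-- An `R`-linear map between submodules of the fraction field is multiplication by a ratio. -/
theorem frac_hom_mul {I : Submodule R K} (φ : I →ₗ[R] K) (a b : I) :
    (a : K) * φ b = b * φ a := by
  obtain ⟨p, q, hq, hpq⟩ := IsFractionRing.div_surjective (A := R) (a : K)
  obtain ⟨p', q', hq', hpq'⟩ := IsFractionRing.div_surjective (A := R) (b : K)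
  have hq0 : algebraMap R K q ≠ 0 := IsFractionRing.to_map_ne_zero_of_mem_nonZeroDivisors hq
  have hq0' : algebraMap R K q' ≠ 0 := IsFractionRing.to_map_ne_zero_of_mem_nonZeroDivisors hq'
  have h1 : (p' * q) • a = (p * q') • b := by
    ext1
    simp only [Submodule.coe_smul, Algebra.smul_def, map_mul, ← hpq, ← hpq']
    field_simp
  have h2 := congrArg φ h1
  rw [map_smul, map_smul, Algebra.smul_def, Algebra.smul_def, map_mul, map_mul] at h2
  rw [← hpq, ← hpq']
  field_simp
  linear_combination -h2

theorem frac_ne_bot_exists {I : Submodule R K} (hI : I ≠ ⊥) : ∃ a : I, (a : K) ≠ 0 := by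
  obtain ⟨a, ha, h0⟩ := Submodule.exists_mem_ne_zero_of_ne_bot hI
  exact ⟨⟨a, ha⟩, h0⟩

/-- `Hom_R(I, J) ≅ J : I` for fractional ideals. -/
noncomputable def fracHomEquiv {I : Submodule R K} (hI : I ≠ ⊥) (J : Submodule R K) :
    (J / I : Submodule R K) ≃ₗ[R] (I →ₗ[R] J) := by
  let F : (J / I : Submodule R K) →ₗ[R] (I →ₗ[R] J) :=
    { toFun := fun z =>
        { toFun := fun x => ⟨z * x, Submodule.mem_div_iff_forall_mul_mem.1 z.2 x x.2⟩
          map_add' := fun x y => by ext1; simp [mul_add]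
          map_smul' := fun r x => by ext1; simp }
      map_add' := fun z w => by ext x; simp [add_mul]
      map_smul' := fun r z => by ext x; simp }
  refine LinearEquiv.ofBijective F ⟨?_, ?_⟩
  · intro z w h
    obtain ⟨a, ha⟩ := frac_ne_bot_exists hI
    have h1 : (z : K) * a = w * a := congrArg Subtype.val (LinearMap.congr_fun h a)
    ext1
    exact mul_right_cancel₀ ha h1
  · intro φ
    obtain ⟨a, ha⟩ := frac_ne_bot_exists hI
    have key : ∀ x : I, ((φ a : K) / a) * x = φ x := by
      intro x
      have := frac_hom_mul (J.subtype ∘ₗ φ) a x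
      simp only [LinearMap.comp_apply, Submodule.subtype_apply] at this
      field_simp
      linear_combination -this
    refine ⟨⟨(φ a : K) / a, Submodule.mem_div_iff_forall_mul_mem.2 fun y hy => ?_⟩, ?_⟩
    · have := key ⟨y, hy⟩
      simp only at this
      rw [this]; exact (φ _).2
    · ext x
      exact key x

@[simp] theorem fracHomEquiv_apply {I : Submodule R K} (hI : I ≠ ⊥) (J : Submodule R K)
    (z : (J / I : Submodule R K)) (x : I) : (fracHomEquiv hI J z x : K) = z * x := rfl

variable (R K) in
/-- `R` as a submodule of its fraction field. -/
noncomputable def oneEquiv : R ≃ₗ[R] (1 : Submodule R K) :=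
  (LinearEquiv.ofInjective (Algebra.linearMap R K) (IsFractionRing.injective R K)).trans
    (LinearEquiv.ofEq _ _ Submodule.one_eq_range.symm)

@[simp] theorem oneEquiv_apply (r : R) : (oneEquiv R K r : K) = algebraMap R K r := rfl

/-- `I^* ≅ 1 / I`. -/
noncomputable def fracDualEquiv {I : Submodule R K} (hI : I ≠ ⊥) :
    (1 / I : Submodule R K) ≃ₗ[R] Module.Dual R I :=
  (fracHomEquiv hI 1).trans (LinearEquiv.congrRight (oneEquiv R K).symm)

theorem fracDualEquiv_apply {I : Submodule R K} (hI : I ≠ ⊥)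
    (z : (1 / I : Submodule R K)) (x : I) :
    algebraMap R K (fracDualEquiv hI z x) = z * x := by
  change algebraMap R K ((oneEquiv R K).symm (fracHomEquiv hI 1 z x)) = z * x
  rw [← oneEquiv_apply, LinearEquiv.apply_symm_apply, fracHomEquiv_apply]

theorem frac_div_div (I J P : Submodule R K) : I / J / P = I / (J * P) := by
  ext x
  simp only [Submodule.mem_div_iff_forall_mul_mem]
  constructor
  · intro h y hy
    induction hy using Submodule.mul_induction_on' with
    | mem_mul_mem j hj p hp => rw [mul_comm j p, ← mul_assoc]; exact h p hp j hj
    | add a _ b _ ha hb => rw [mul_add]; exact add_mem ha hb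
  · intro h p hp j hj
    rw [mul_assoc, mul_comm p j]
    exact h _ (Submodule.mul_mem_mul hj hp)

theorem frac_le_hull (I : Submodule R K) : I ≤ 1 / (1 / I) := by
  intro x hx
  rw [Submodule.mem_div_iff_forall_mul_mem]
  intro y hy
  rw [mul_comm]
  exact Submodule.mem_div_iff_forall_mul_mem.1 hy x hx

theorem frac_inv_anti {I J : Submodule R K} (h : I ≤ J) : (1 / J : Submodule R K) ≤ 1 / I := by
  intro x hx
  rw [Submodule.mem_div_iff_forall_mul_mem] at hx ⊢
  exact fun y hy => hx y (h hy)

theorem frac_inv_hull (I : Submodule R K) : (1 / (1 / (1 / I)) : Submodule R K) = 1 / I :=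
  le_antisymm (frac_inv_anti (frac_le_hull I)) (frac_le_hull _)

theorem frac_inv_one : (1 / 1 : Submodule R K) = 1 := by
  ext x
  rw [Submodule.mem_div_iff_forall_mul_mem]
  constructor
  · intro h; simpa using h 1 (Submodule.one_le.1 le_rfl)
  · intro hx y hy
    have := Submodule.mul_mem_mul hx hy
    rwa [mul_one] at this

theorem frac_mul_ne_bot {I J : Submodule R K} (hI : I ≠ ⊥) (hJ : J ≠ ⊥) : I * J ≠ ⊥ := by
  obtain ⟨a, ha⟩ := frac_ne_bot_exists hI
  obtain ⟨b, hb⟩ := frac_ne_bot_exists hJ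
  exact Submodule.ne_bot_iff _ |>.2 ⟨a * b, Submodule.mul_mem_mul a.2 b.2, mul_ne_zero ha hb⟩

theorem frac_one_ne_bot : (1 : Submodule R K) ≠ ⊥ :=
  Submodule.ne_bot_iff _ |>.2 ⟨1, (Submodule.one_le.1 le_rfl), one_ne_zero⟩

theorem frac_inv_ne_bot {I : Submodule R K} (hfg : I.FG) : (1 / I : Submodule R K) ≠ ⊥ := by
  obtain ⟨s, rfl⟩ := hfg
  obtain ⟨b, hb⟩ := IsLocalization.exist_integer_multiples_of_finset (nonZeroDivisors R) s
  refine Submodule.ne_bot_iff _ |>.2 ⟨algebraMap R K b, ?_,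
    IsFractionRing.to_map_ne_zero_of_mem_nonZeroDivisors b.2⟩
  rw [Submodule.mem_div_iff_forall_mul_mem]
  intro y hy
  induction hy using Submodule.span_induction with
  | mem y hy =>
    obtain ⟨r, hr⟩ := hb y hy
    rw [Submodule.mem_one]
    exact ⟨r, by rw [hr, Algebra.smul_def]⟩
  | zero => simp
  | add y z _ _ hy hz => rw [mul_add]; exact add_mem hy hz
  | smul r y _ hy => rw [mul_smul_comm]; exact Submodule.smul_mem _ _ hy

theorem frac_inv_fg [IsNoetherianRing R] {I : Submodule R K} (hI : I ≠ ⊥) :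
    (1 / I : Submodule R K).FG := by
  obtain ⟨a, ha⟩ := frac_ne_bot_exists hI
  let f : (1 / I : Submodule R K) →ₗ[R] R :=
    (LinearMap.applyₗ a) ∘ₗ (fracDualEquiv hI).toLinearMap
  have hf : Function.Injective f := by
    intro x y hxy
    have h1 := fracDualEquiv_apply hI x a
    have h2 := fracDualEquiv_apply hI y a
    have h3 : fracDualEquiv hI x a = fracDualEquiv hI y a := hxy
    rw [h3, h2] at h1
    ext1
    exact (mul_right_cancel₀ ha h1).symm
  have : Module.Finite R (1 / I : Submodule R K) := Module.Finite.of_injective f hf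
  exact Module.Finite.iff_fg.1 this

theorem frac_rankOne {I : Submodule R K} (hI : I ≠ ⊥) : Module.finrank K (K ⊗[R] I) = 1 := by
  obtain ⟨a, ha⟩ := frac_ne_bot_exists hI
  have : IsLocalizedModule (nonZeroDivisors R) I.subtype := by
    refine ⟨?_, ?_, ?_⟩
    · intro s
      rw [Module.End.isUnit_iff]
      have hs : algebraMap R K s ≠ 0 := IsFractionRing.to_map_ne_zero_of_mem_nonZeroDivisors s.2
      constructor
      · intro x y hxy
        have h : (s : R) • x = (s : R) • y := hxy
        rw [Algebra.smul_def, Algebra.smul_def] at h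
        exact mul_left_cancel₀ hs h
      · intro y
        refine ⟨(algebraMap R K s)⁻¹ * y, ?_⟩
        change (s : R) • ((algebraMap R K s)⁻¹ * y) = y
        rw [Algebra.smul_def, mul_inv_cancel_left₀ hs]
    · intro y
      obtain ⟨p, q, hq, hpq⟩ := IsFractionRing.div_surjective (A := R) (y / a)
      refine ⟨(p • a, ⟨q, hq⟩), ?_⟩
      have hq0 : algebraMap R K q ≠ 0 := IsFractionRing.to_map_ne_zero_of_mem_nonZeroDivisors hq
      change q • y = ((p • a : I) : K)
      rw [Submodule.coe_smul, Algebra.smul_def, Algebra.smul_def]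
      field_simp at hpq
      exact hpq.symm
    · intro x y hxy
      exact ⟨1, by rw [Subtype.ext hxy]⟩
  have e := (IsLocalizedModule.isBaseChange (nonZeroDivisors R) K I.subtype).equiv
  rw [e.finrank_eq, Module.finrank_self]

end FracIdeal

section FracReflexive

set_option linter.unusedSectionVars false

variable {R : Type u} [CommRing R] [IsDomain R]

/-- A fractional ideal equal to its divisorial hull is a reflexive module. -/
theorem frac_isReflexive {K : Type u} [Field K] [Algebra R K] [IsFractionRing R K]
    {I : Submodule R K} (hI : I ≠ ⊥) (hfg : I.FG) (h : (1 / (1 / I) : Submodule R K) = I) :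
    Module.IsReflexive R I := by
  have hI' := frac_inv_ne_bot hfg
  obtain ⟨y, hy⟩ := frac_ne_bot_exists hI'
  refine ⟨⟨?_, ?_⟩⟩
  · intro x x' hx
    have h1 := LinearMap.congr_fun hx (fracDualEquiv hI y)
    have h2 := congrArg (algebraMap R K) h1
    rw [Dual.eval_apply, Dual.eval_apply, fracDualEquiv_apply, fracDualEquiv_apply] at h2
    ext1
    exact mul_left_cancel₀ hy h2
  · intro ψ
    let θ : Module.Dual R (1 / I : Submodule R K) := ψ ∘ₗ (fracDualEquiv hI).toLinearMap
    obtain ⟨z, hz⟩ := (fracDualEquiv hI').surjective θ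
    refine ⟨⟨z, h.le z.2⟩, ?_⟩
    ext φ
    obtain ⟨w, rfl⟩ := (fracDualEquiv hI).surjective φ
    apply IsFractionRing.injective R K
    rw [Dual.eval_apply, fracDualEquiv_apply]
    have h1 : ψ (fracDualEquiv hI w) = fracDualEquiv hI' z w := by rw [hz]; rfl
    rw [h1, fracDualEquiv_apply, mul_comm]

theorem frac_hull_eq_of_isReflexive {K : Type u} [Field K] [Algebra R K] [IsFractionRing R K]
    {I : Submodule R K} (hI : I ≠ ⊥) (hfg : I.FG) (h : Module.IsReflexive R I) :
    (1 / (1 / I) : Submodule R K) = I := by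
  have hI' := frac_inv_ne_bot hfg
  refine le_antisymm (fun z hz => ?_) (frac_le_hull I)
  obtain ⟨y, hy⟩ := frac_ne_bot_exists hI'
  let ψ : Module.Dual R (Module.Dual R I) :=
    fracDualEquiv hI' ⟨z, hz⟩ ∘ₗ (fracDualEquiv hI).symm.toLinearMap
  obtain ⟨x, hx⟩ := h.bijective_dual_eval'.2 ψ
  have h1 := LinearMap.congr_fun hx (fracDualEquiv hI y)
  rw [Dual.eval_apply] at h1
  have h2 : ψ (fracDualEquiv hI y) = fracDualEquiv hI' ⟨z, hz⟩ y := by simp [ψ]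
  rw [h2] at h1
  have h3 := congrArg (algebraMap R K) h1
  rw [fracDualEquiv_apply, fracDualEquiv_apply, mul_comm] at h3
  have h4 : (x : K) = z := mul_right_cancel₀ hy h3
  rw [← h4]; exact x.2

theorem frac_isDivisorial {I : Submodule R (FractionRing R)} (hI : I ≠ ⊥) (hfg : I.FG)
    (h : (1 / (1 / I) : Submodule R (FractionRing R)) = I) : IsDivisorialModule R I :=
  ⟨Module.Finite.iff_fg.2 hfg, frac_isReflexive hI hfg h, frac_rankOne hI⟩

theorem IsDivisorialModule.of_equiv {X Y : Type u} [AddCommGroup X] [Module R X] [AddCommGroup Y]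
    [Module R Y] (h : IsDivisorialModule R X) (e : X ≃ₗ[R] Y) : IsDivisorialModule R Y := by
  obtain ⟨h1, h2, h3⟩ := h
  refine ⟨Module.Finite.equiv e, Module.equiv e, ?_⟩
  rw [HasRankOne] at h3 ⊢
  rw [← h3]
  exact (LinearEquiv.baseChange R (FractionRing R) X Y e).finrank_eq.symm

/-- Every divisorial module is isomorphic to a divisorial fractional ideal. -/
theorem IsDivisorialModule.exists_frac {X : Type u} [AddCommGroup X] [Module R X]
    (h : IsDivisorialModule R X) : ∃ I : Submodule R (FractionRing R), I ≠ ⊥ ∧ I.FG ∧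
      (1 / (1 / I) : Submodule R (FractionRing R)) = I ∧ Nonempty (X ≃ₗ[R] I) := by
  obtain ⟨h1, h2, h3⟩ := h
  have e : (FractionRing R ⊗[R] X) ≃ₗ[FractionRing R] FractionRing R :=
    LinearEquiv.ofFinrankEq _ _ (by rw [Module.finrank_self]; exact h3)
  let j : X →ₗ[R] FractionRing R :=
    (e.toLinearMap.restrictScalars R) ∘ₗ (TensorProduct.mk R (FractionRing R) X 1)
  have hj : Function.Injective j := by
    refine e.injective.comp ?_
    have hloc := (isLocalizedModule_iff_isBaseChange (nonZeroDivisors R) (FractionRing R)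
      (TensorProduct.mk R (FractionRing R) X 1)).2 (TensorProduct.isBaseChange R X _)
    intro x y hxy
    obtain ⟨c, hc⟩ := hloc.exists_of_eq hxy
    exact smul_right_injective X (nonZeroDivisors.coe_ne_zero c) hc
  let ej : X ≃ₗ[R] LinearMap.range j := LinearEquiv.ofInjective j hj
  have hne : LinearMap.range j ≠ ⊥ := by
    intro hb
    have hsub : Subsingleton X := by
      have : Subsingleton (LinearMap.range j) := by rw [hb]; infer_instance
      exact ej.toEquiv.subsingleton
    rw [HasRankOne, Module.finrank_zero_of_subsingleton] at h3
    exact zero_ne_one h3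
  have hfg : (LinearMap.range j).FG := Module.Finite.iff_fg.1 inferInstance
  exact ⟨LinearMap.range j, hne, hfg,
    frac_hull_eq_of_isReflexive hne hfg (Module.equiv ej), ⟨ej⟩⟩

end FracReflexive

section FracClass

set_option linter.unusedSectionVars false

variable {R : Type u} [CommRing R] [IsDomain R]

theorem frac_div_self [IsIntegrallyClosed R] {K : Type u} [Field K] [Algebra R K]
    [IsFractionRing R K] {I : Submodule R K} (hI : I ≠ ⊥) (hfg : I.FG) : (I / I) = 1 := by
  ext x
  rw [Submodule.mem_div_iff_forall_mul_mem, Submodule.mem_one]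
  constructor
  · intro h
    exact IsIntegrallyClosed.isIntegral_iff.1
      (isIntegral_of_smul_mem_submodule (A := K) (M := K) I hI hfg x h)
  · rintro ⟨r, rfl⟩ y hy
    rw [← Algebra.smul_def]
    exact I.smul_mem r hy

/-- Over a normal domain every endomorphism of a divisorial module is a scalar. -/
theorem IsDivisorialModule.end_scalar [IsIntegrallyClosed R] {X : Type u} [AddCommGroup X]
    [Module R X] (h : IsDivisorialModule R X) (φ : X →ₗ[R] X) : ∃ r : R, ∀ x, φ x = r • x := by
  obtain ⟨I, hI, hfg, -, ⟨e⟩⟩ := h.exists_frac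
  obtain ⟨z, hz⟩ := (fracHomEquiv hI I).surjective (e.toLinearMap ∘ₗ φ ∘ₗ e.symm.toLinearMap)
  obtain ⟨r, hr⟩ := Submodule.mem_one.1 ((frac_div_self hI hfg).le z.2)
  refine ⟨r, fun x => e.injective ?_⟩
  have h1 := LinearMap.congr_fun hz (e x)
  simp only [LinearMap.comp_apply, LinearEquiv.coe_coe, LinearEquiv.symm_apply_apply] at h1
  rw [← h1, map_smul]
  ext1
  rw [fracHomEquiv_apply, ← hr, Submodule.coe_smul, Algebra.smul_def]

theorem frac_fg_one : (1 : Submodule R (FractionRing R)).FG := by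
  rw [Submodule.one_eq_span]; exact Submodule.fg_span_singleton _

theorem IsDivisorialModule.ring : IsDivisorialModule R R :=
  (frac_isDivisorial (R := R) frac_one_ne_bot (frac_fg_one)
    (by rw [frac_inv_one, frac_inv_one])).of_equiv (oneEquiv R (FractionRing R)).symm

variable [IsNoetherianRing R]

theorem frac_inv_isDivisorial {I : Submodule R (FractionRing R)} (hI : I ≠ ⊥) (hfg : I.FG) :
    IsDivisorialModule R (1 / I : Submodule R (FractionRing R)) :=
  frac_isDivisorial (frac_inv_ne_bot hfg) (frac_inv_fg hI) (frac_inv_hull I)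

theorem frac_hull_isDivisorial {I : Submodule R (FractionRing R)} (hI : I ≠ ⊥) (hfg : I.FG) :
    IsDivisorialModule R (1 / (1 / I) : Submodule R (FractionRing R)) :=
  frac_inv_isDivisorial (frac_inv_ne_bot hfg) (frac_inv_fg hI)

variable {Cl : Type u} [AddCommGroup Cl] (hCl : DivisorClassGroupData R Cl)

/-- The divisor class of a nonzero finitely generated fractional ideal: the class of its
divisorial hull. -/
noncomputable def fracCl (I : Submodule R (FractionRing R)) : Cl :=
  hCl.cl (ModuleCat.of R (1 / (1 / I) : Submodule R (FractionRing R)))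

theorem fracCl_congr {I J : Submodule R (FractionRing R)}
    (h : (1 / I : Submodule R (FractionRing R)) = 1 / J) : fracCl hCl I = fracCl hCl J := by
  rw [fracCl, fracCl, h]

theorem cl_eq_of_equiv {X Y : Type u} [AddCommGroup X] [Module R X] [AddCommGroup Y] [Module R Y]
    (hX : IsDivisorialModule R X) (e : X ≃ₗ[R] Y) :
    hCl.cl (ModuleCat.of R X) = hCl.cl (ModuleCat.of R Y) :=
  (hCl.cl_eq_iff (ModuleCat.of R X) (ModuleCat.of R Y) hX (hX.of_equiv e)).2 ⟨e⟩

theorem fracCl_eq_cl {I : Submodule R (FractionRing R)} (hI : I ≠ ⊥) (hfg : I.FG)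
    (h : (1 / (1 / I) : Submodule R (FractionRing R)) = I)
    {X : Type u} [AddCommGroup X] [Module R X] (e : X ≃ₗ[R] I) :
    fracCl hCl I = hCl.cl (ModuleCat.of R X) :=
  cl_eq_of_equiv hCl (frac_hull_isDivisorial hI hfg) ((LinearEquiv.ofEq _ _ h).trans e.symm)

theorem fracCl_one : fracCl hCl 1 = 0 := by
  rw [fracCl_eq_cl hCl frac_one_ne_bot frac_fg_one (by rw [frac_inv_one, frac_inv_one])
    (oneEquiv R (FractionRing R))]
  exact hCl.cl_ring

theorem frac_inv_hull_mul_hull (I J : Submodule R (FractionRing R)) :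
    (1 / ((1 / (1 / I)) * (1 / (1 / J))) : Submodule R (FractionRing R)) = 1 / (I * J) := by
  rw [← frac_div_div, frac_inv_hull, frac_div_div, mul_comm I, ← frac_div_div, frac_inv_hull,
    frac_div_div, mul_comm]

theorem fracCl_mul {I J : Submodule R (FractionRing R)} (hI : I ≠ ⊥) (hfgI : I.FG)
    (hJ : J ≠ ⊥) (hfgJ : J.FG) : fracCl hCl (I * J) = fracCl hCl I + fracCl hCl J := by
  have hI1 := frac_inv_ne_bot (frac_inv_fg hI)
  have hJ1 := frac_inv_ne_bot (frac_inv_fg hJ)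
  have hA := frac_hull_isDivisorial hI hfgI
  have hB := frac_hull_isDivisorial hJ hfgJ
  rw [fracCl, fracCl, fracCl]
  have h1 := hCl.cl_add (ModuleCat.of R (1 / (1 / I) : Submodule R (FractionRing R)))
    (ModuleCat.of R (1 / (1 / J) : Submodule R (FractionRing R))) hA hB
  rw [h1]
  refine cl_eq_of_equiv hCl (frac_hull_isDivisorial (frac_mul_ne_bot hI hJ) (hfgI.mul hfgJ)) ?_
  -- `Hom(A ⊗ B, R) ≅ Hom(A, B^*) ≅ (1 / B) / A = 1 / (B A)`
  have e1 : Module.Dual R ((1 / (1 / I) : Submodule R (FractionRing R)) ⊗[R]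
      (1 / (1 / J) : Submodule R (FractionRing R))) ≃ₗ[R]
      (1 / (I * J) : Submodule R (FractionRing R)) :=
    (TensorProduct.lift.equiv (RingHom.id R) _ _ R).symm.trans
      ((LinearEquiv.congrRight (fracDualEquiv hJ1).symm).trans
        ((fracHomEquiv hI1 _).symm.trans (LinearEquiv.ofEq _ _ (by
          rw [frac_div_div, mul_comm, frac_inv_hull_mul_hull]))))
  exact (fracDualEquiv (frac_inv_ne_bot (hfgI.mul hfgJ))).trans e1.dualMap

theorem fracCl_inv [IsIntegrallyClosed R] {I : Submodule R (FractionRing R)} (hI : I ≠ ⊥)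
    (hfg : I.FG) : fracCl hCl (1 / I) = -fracCl hCl I := by
  rw [eq_neg_iff_add_eq_zero, ← fracCl_mul hCl (frac_inv_ne_bot hfg) (frac_inv_fg hI) hI hfg,
    ← fracCl_one hCl]
  apply fracCl_congr
  rw [frac_inv_one, mul_comm, ← frac_div_div, frac_div_self (frac_inv_ne_bot hfg) (frac_inv_fg hI)]

theorem fracCl_span {x : FractionRing R} (hx : x ≠ 0) :
    fracCl hCl (Submodule.span R {x}) = 0 := by
  have h1 : (1 / Submodule.span R {x} : Submodule R (FractionRing R)) = Submodule.span R {x⁻¹} := by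
    ext y
    rw [Submodule.mem_div_iff_forall_mul_mem, Submodule.mem_span_singleton]
    constructor
    · intro h
      obtain ⟨r, hr⟩ := Submodule.mem_one.1 (h x (Submodule.mem_span_singleton_self x))
      exact ⟨r, by rw [Algebra.smul_def, hr]; field_simp⟩
    · rintro ⟨r, rfl⟩ z hz
      obtain ⟨s, rfl⟩ := Submodule.mem_span_singleton.1 hz
      rw [Submodule.mem_one]
      exact ⟨r * s, by rw [Algebra.smul_def, Algebra.smul_def, map_mul]; field_simp⟩
  have h2 : ∀ {y : FractionRing R}, y ≠ 0 → Submodule.span R {y} ≠ ⊥ := fun hy => by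
    rwa [Ne, Submodule.span_singleton_eq_bot]
  have h3 : (1 / (1 / Submodule.span R {x}) : Submodule R (FractionRing R)) =
      Submodule.span R {x} := by
    refine le_antisymm ?_ (frac_le_hull _)
    intro y hy
    rw [h1, Submodule.mem_div_iff_forall_mul_mem] at hy
    obtain ⟨r, hr⟩ := Submodule.mem_one.1 (hy x⁻¹ (Submodule.mem_span_singleton_self _))
    rw [Submodule.mem_span_singleton]
    exact ⟨r, by rw [Algebra.smul_def, hr]; field_simp⟩
  rw [fracCl_eq_cl hCl (h2 hx) (Submodule.fg_span_singleton x) h3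
    (LinearEquiv.toSpanNonzeroSingleton R (FractionRing R) x hx)]
  exact hCl.cl_ring

/-- `Hom_R(X, Y)` is divisorial of class `cl Y - cl X`. -/
theorem IsDivisorialModule.hom [IsIntegrallyClosed R] {X Y : Type u} [AddCommGroup X] [Module R X]
    [AddCommGroup Y] [Module R Y] (hX : IsDivisorialModule R X) (hY : IsDivisorialModule R Y) :
    IsDivisorialModule R (X →ₗ[R] Y) ∧ hCl.cl (ModuleCat.of R (X →ₗ[R] Y)) =
      hCl.cl (ModuleCat.of R Y) - hCl.cl (ModuleCat.of R X) := by
  obtain ⟨I, hI, hfgI, hI2, ⟨e⟩⟩ := hX.exists_frac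
  obtain ⟨J, hJ, hfgJ, hJ2, ⟨f⟩⟩ := hY.exists_frac
  have hJ' := frac_inv_ne_bot hfgJ
  have hfgJ' := frac_inv_fg hJ
  have hP := frac_mul_ne_bot hJ' hI
  have hfgP := hfgJ'.mul hfgI
  have e1 : (X →ₗ[R] Y) ≃ₗ[R] (1 / ((1 / J) * I) : Submodule R (FractionRing R)) :=
    (LinearEquiv.arrowCongr e f).trans ((fracHomEquiv hI J).symm.trans
      (LinearEquiv.ofEq _ _ (by rw [← frac_div_div, hJ2])))
  refine ⟨(frac_inv_isDivisorial hP hfgP).of_equiv e1.symm, ?_⟩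
  rw [← fracCl_eq_cl hCl (frac_inv_ne_bot hfgP) (frac_inv_fg hP) (frac_inv_hull _) e1,
    fracCl_inv hCl hP hfgP, fracCl_mul hCl hJ' hfgJ' hI hfgI, fracCl_inv hCl hJ hfgJ,
    fracCl_eq_cl hCl hI hfgI hI2 e, fracCl_eq_cl hCl hJ hfgJ hJ2 f]
  abel

theorem IsDivisorialModule.dual [IsIntegrallyClosed R] {X : Type u} [AddCommGroup X] [Module R X]
    (hX : IsDivisorialModule R X) : IsDivisorialModule R (Module.Dual R X) ∧
      hCl.cl (ModuleCat.of R (Module.Dual R X)) = - hCl.cl (ModuleCat.of R X) := by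
  have := hX.hom hCl IsDivisorialModule.ring
  rw [hCl.cl_ring, zero_sub] at this
  exact this

end FracClass

/-! ### Direct summands of direct sums of divisorial modules -/

section AddClosure

variable {R : Type u} [CommRing R]

theorem MemAdd.of_retract {M N : Type u} [AddCommGroup M] [Module R M] [AddCommGroup N]
    [Module R N] {ι : Type} [Fintype ι] (i : N →ₗ[R] (ι → M)) (r : (ι → M) →ₗ[R] N)
    (h : ∀ x, r (i x) = x) : MemAdd R M N := by
  refine ⟨Fintype.card ι, ModuleCat.of R (LinearMap.ker r), ⟨?_⟩⟩
  let e : (N × LinearMap.ker r) ≃ₗ[R] (ι → M) :=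
    { toFun := fun z => i z.1 + z.2
      invFun := fun z => (r z, ⟨z - i (r z), by rw [LinearMap.mem_ker, map_sub, h, sub_self]⟩)
      left_inv := fun z => by
        have hz : r (i z.1 + z.2) = z.1 := by
          rw [map_add, h, LinearMap.mem_ker.1 z.2.2, add_zero]
        refine Prod.ext hz (Subtype.ext ?_)
        change i z.1 + z.2 - i (r (i z.1 + z.2)) = z.2
        rw [hz]; abel
      right_inv := fun z => by
        change i (r z) + (z - i (r z)) = z
        abel
      map_add' := fun z w => by
        change i (z.1 + w.1) + (z.2 + w.2 : ι → M) = _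
        rw [map_add]; abel
      map_smul' := fun c z => by
        change i (c • z.1) + (c • z.2 : ι → M) = _
        rw [map_smul, ← smul_add]; rfl }
  exact e.trans (LinearEquiv.funCongrLeft R M (Fintype.equivFin ι).symm)

theorem MemAdd.exists_retract {M N : Type u} [AddCommGroup M] [Module R M] [AddCommGroup N]
    [Module R N] (h : MemAdd R M N) : ∃ (k : ℕ) (i : N →ₗ[R] (Fin k → M))
    (r : (Fin k → M) →ₗ[R] N), ∀ x, r (i x) = x := by
  obtain ⟨k, P, ⟨e⟩⟩ := h
  exact ⟨k, e.toLinearMap ∘ₗ LinearMap.inl R N P, LinearMap.fst R N P ∘ₗ e.symm.toLinearMap,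
    fun x => by simp⟩

theorem MemAdd.retract {M N N' : Type u} [AddCommGroup M] [Module R M] [AddCommGroup N]
    [Module R N] [AddCommGroup N'] [Module R N'] (h : MemAdd R M N) (i' : N' →ₗ[R] N)
    (r' : N →ₗ[R] N') (h' : ∀ x, r' (i' x) = x) : MemAdd R M N' := by
  obtain ⟨k, i, r, hir⟩ := h.exists_retract
  exact MemAdd.of_retract (i ∘ₗ i') (r' ∘ₗ r) fun x => by simp [hir, h']

theorem MemAdd.pi {M : Type u} [AddCommGroup M] [Module R M] {ι : Type} [Fintype ι]
    {N : ι → Type u} [∀ j, AddCommGroup (N j)] [∀ j, Module R (N j)]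
    (h : ∀ j, MemAdd R M (N j)) : MemAdd R M (∀ j, N j) := by
  choose k i r hir using fun j => (h j).exists_retract
  refine MemAdd.of_retract (ι := Σ j, Fin (k j))
    (LinearMap.pi fun p => LinearMap.proj p.2 ∘ₗ i p.1 ∘ₗ LinearMap.proj p.1)
    (LinearMap.pi fun j => r j ∘ₗ LinearMap.pi fun a => LinearMap.proj (⟨j, a⟩ : Σ j, Fin (k j))) ?_
  intro x
  funext j
  exact hir j (x j)

theorem memAdd_summand {ι : Type} [DecidableEq ι] (N : ι → Type u) [∀ j, AddCommGroup (N j)]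
    [∀ j, Module R (N j)] (k : ι) : MemAdd R (∀ j, N j) (N k) :=
  MemAdd.of_retract (ι := Unit) (LinearMap.pi fun _ => LinearMap.single R N k)
    (LinearMap.proj k ∘ₗ LinearMap.proj ()) fun x => by simp

variable [IsLocalRing R]

/-- A nonzero module with scalar endomorphisms that is a direct summand of a finite direct sum
is isomorphic to one of the summands, provided these are torsion-free with scalar
endomorphisms. -/
theorem exists_equiv_of_retract [IsDomain R] {X : Type u} [AddCommGroup X] [Module R X]
    [Nontrivial X] (hX : ∀ φ : X →ₗ[R] X, ∃ r : R, ∀ x, φ x = r • x)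
    {ι : Type} [Fintype ι] {N : ι → Type u} [∀ j, AddCommGroup (N j)] [∀ j, Module R (N j)]
    [∀ j, IsTorsionFree R (N j)]
    (hN : ∀ j, ∀ φ : N j →ₗ[R] N j, ∃ r : R, ∀ x, φ x = r • x)
    (i : X →ₗ[R] ∀ j, N j) (r : (∀ j, N j) →ₗ[R] X) (h : ∀ x, r (i x) = x) :
    ∃ j, Nonempty (X ≃ₗ[R] N j) := by
  classical
  let f : ∀ j, X →ₗ[R] N j := fun j => LinearMap.proj j ∘ₗ i
  let g : ∀ j, N j →ₗ[R] X := fun j => r ∘ₗ LinearMap.single R N j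
  choose l hl using fun j => hX (g j ∘ₗ f j)
  choose m hm using fun j => hN j (f j ∘ₗ g j)
  have hsum : ∀ x : X, (∑ j, l j) • x = x := by
    intro x
    rw [Finset.sum_smul]
    conv_rhs => rw [← h x, ← LinearMap.sum_single_apply N (i x), map_sum]
    refine Finset.sum_congr rfl fun j _ => ?_
    rw [← hl j x]
    rfl
  -- `∑ l j = 1` on `X`, so some `l j` is a unit
  have hex : ∃ j, IsUnit (l j) := by
    by_contra hc
    push Not at hc
    have h1 : ∑ j, l j ∈ IsLocalRing.maximalIdeal R :=
      Ideal.sum_mem _ fun j _ => (IsLocalRing.mem_maximalIdeal _).2 (hc j)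
    have h2 : IsUnit (1 - ∑ j, l j) := by
      by_contra hu
      have h3 := Ideal.add_mem _ ((IsLocalRing.mem_maximalIdeal _).2 hu) h1
      rw [sub_add_cancel] at h3
      exact (IsLocalRing.mem_maximalIdeal _).1 h3 isUnit_one
    obtain ⟨x, hx⟩ := exists_ne (0 : X)
    apply hx
    have h4 : (1 - ∑ j, l j) • x = 0 := by rw [sub_smul, hsum, one_smul, sub_self]
    exact (h2.smul_eq_zero).1 h4
  obtain ⟨j, hj⟩ := hex
  obtain ⟨v, hv⟩ := hj.exists_left_inv
  have hf : ∀ x, v • g j (f j x) = x := by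
    intro x
    have := hl j x
    simp only [LinearMap.comp_apply] at this
    rw [this, smul_smul, hv, one_smul]
  have hlm : l j = m j := by
    obtain ⟨x, hx⟩ := exists_ne (0 : X)
    have hfx : f j x ≠ 0 := by
      intro h0
      apply hx
      rw [← hf x, h0, map_zero, smul_zero]
    have h1 := hm j (f j x)
    simp only [LinearMap.comp_apply] at h1
    have h2 := hl j x
    simp only [LinearMap.comp_apply] at h2
    rw [h2, map_smul] at h1
    exact smul_left_injective R hfx h1
  refine ⟨j, ⟨LinearEquiv.ofLinearMap (f j) (v • g j) ?_ ?_⟩⟩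
  · ext y
    have h1 := hm j y
    simp only [LinearMap.comp_apply] at h1
    simp only [LinearMap.comp_apply, LinearMap.smul_apply, map_smul, LinearMap.id_apply]
    rw [h1, ← hlm, smul_smul, hv, one_smul]
  · ext x
    exact hf x

/-- Krull-Schmidt in the form used below: a property of modules that is stable under
isomorphism and direct sums passes from modules with scalar endomorphisms to every direct
summand of a finite direct sum of them. -/
theorem summand_induction (P : ModuleCat.{u} R → Prop)
    (h0 : ∀ X : ModuleCat.{u} R, Subsingleton X → P X)
    (hiso : ∀ X Y : ModuleCat.{u} R, P X → (X ≃ₗ[R] Y) → P Y)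
    (hprod : ∀ X Y : ModuleCat.{u} R, P X → P Y → P (ModuleCat.of R (X × Y)))
    (m : ℕ) (N : Fin m → Type u) [∀ j, AddCommGroup (N j)] [∀ j, Module R (N j)]
    (hN : ∀ j, ∀ φ : N j →ₗ[R] N j, ∃ r : R, ∀ x, φ x = r • x)
    (hP : ∀ j, P (ModuleCat.of R (N j)))
    {E : Type u} [AddCommGroup E] [Module R E]
    (i : E →ₗ[R] ∀ j, N j) (r : (∀ j, N j) →ₗ[R] E) (h : ∀ x, r (i x) = x) :
    P (ModuleCat.of R E) := by
  induction m generalizing E with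
  | zero =>
    have hi : Function.Injective i := Function.LeftInverse.injective h
    exact h0 _ hi.subsingleton
  | succ m ih =>
    let c := Fin.consLinearEquiv R N
    let a : E →ₗ[R] N 0 := LinearMap.fst R _ _ ∘ₗ c.symm.toLinearMap ∘ₗ i
    let b : E →ₗ[R] (∀ j : Fin m, N j.succ) := LinearMap.snd R _ _ ∘ₗ c.symm.toLinearMap ∘ₗ i
    let p : N 0 →ₗ[R] E := r ∘ₗ c.toLinearMap ∘ₗ LinearMap.inl R _ _
    let q : (∀ j : Fin m, N j.succ) →ₗ[R] E := r ∘ₗ c.toLinearMap ∘ₗ LinearMap.inr R _ _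
    have hpq : ∀ x, p (a x) + q (b x) = x := by
      intro x
      conv_rhs => rw [← h x]
      simp only [p, q, a, b, LinearMap.comp_apply, ← map_add]
      congr 1
      simp
    obtain ⟨w, hw⟩ := hN 0 (a ∘ₗ p)
    simp only [LinearMap.comp_apply] at hw
    have hq : ∀ x, q (b x) = x - p (a x) := fun x => eq_sub_of_add_eq' (hpq x)
    -- if `w` is a unit, `N 0` splits off `E`; otherwise `E` is a summand of the remaining `N j`
    by_cases hu : IsUnit w
    · obtain ⟨v, hv⟩ := hu.exists_left_inv
      have ht : ∀ x, x - v • p (a x) ∈ LinearMap.ker a := by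
        intro x
        rw [LinearMap.mem_ker, map_sub, map_smul, hw, smul_smul, hv, one_smul, sub_self]
      let t : E →ₗ[R] LinearMap.ker a :=
        LinearMap.codRestrict _ (LinearMap.id - v • (p ∘ₗ a)) ht
      have ht_apply : ∀ x, (t x : E) = x - v • p (a x) := fun x => rfl
      have hker : P (ModuleCat.of R (LinearMap.ker a)) := by
        refine ih (fun j => N j.succ) (fun j => hN _) (fun j => hP _)
          (b ∘ₗ (LinearMap.ker a).subtype) (t ∘ₗ q) ?_
        intro x
        ext1
        have hx : a x = 0 := x.2
        simp only [LinearMap.comp_apply, Submodule.subtype_apply]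
        rw [ht_apply, hq, hx]
        simp [hx]
      refine hiso _ (ModuleCat.of R E) (hprod _ _ (hP 0) hker) (LinearEquiv.ofLinearMap
        ((v • p) ∘ₗ LinearMap.fst R _ _ + (LinearMap.ker a).subtype ∘ₗ LinearMap.snd R _ _)
        (a.prod t) ?_ ?_)
      · ext x
        change v • p (a x) + (t x : E) = x
        rw [ht_apply]; abel
      · apply LinearMap.ext
        rintro ⟨y, z⟩
        have hz : a z = 0 := z.2
        have h1 : a (v • p y + z) = y := by
          rw [map_add, map_smul, hw, smul_smul, hv, one_smul, hz, add_zero]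
        refine Prod.ext h1 (Subtype.ext ?_)
        change v • p y + (z : E) - v • p (a (v • p y + z)) = z
        rw [h1]; abel
    · have hu' : IsUnit (1 - w) := by
        by_contra hc
        have h3 := Ideal.add_mem _ ((IsLocalRing.mem_maximalIdeal _).2 hc)
          ((IsLocalRing.mem_maximalIdeal _).2 hu)
        rw [sub_add_cancel] at h3
        exact (IsLocalRing.mem_maximalIdeal _).1 h3 isUnit_one
      obtain ⟨v, hv⟩ := hu'.exists_left_inv
      -- `(1 + v p a) (1 - p a) = 1`
      refine ih (fun j => N j.succ) (fun j => hN _) (fun j => hP _) b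
        (q + v • (p ∘ₗ a ∘ₗ q)) ?_
      intro x
      change q (b x) + v • p (a (q (b x))) = x
      rw [hq, map_sub, hw, map_sub, map_smul, ← one_smul R (p (a x)), smul_smul, ← sub_smul,
        smul_smul]
      rw [mul_one, hv]
      abel

end AddClosure

/-! ### Classes of the summands of a semi-steady module -/

section AddClasses

/-- `Hom(X, -)` commutes with finite products. -/
noncomputable def homPiEquiv {R : Type u} [CommRing R] (X : Type u) [AddCommGroup X] [Module R X]
    {m : ℕ} (M : Fin m → Type u) [∀ i, AddCommGroup (M i)] [∀ i, Module R (M i)] :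
    (∀ j, X →ₗ[R] M j) ≃ₗ[R] (X →ₗ[R] ∀ j, M j) where
  toFun := LinearMap.pi
  invFun f j := LinearMap.proj j ∘ₗ f
  left_inv _ := rfl
  right_inv _ := rfl
  map_add' _ _ := rfl
  map_smul' _ _ := rfl

theorem MemAdd.of_equiv {R : Type u} [CommRing R] {M M' N : Type u} [AddCommGroup M] [Module R M]
    [AddCommGroup M'] [Module R M'] [AddCommGroup N] [Module R N]
    (h : MemAdd R M N) (e : M ≃ₗ[R] M') : MemAdd R M' N := by
  obtain ⟨k, P, ⟨f⟩⟩ := h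
  exact ⟨k, P, ⟨f.trans (LinearEquiv.piCongrRight fun _ => e)⟩⟩

theorem IsDivisorialModule.nontrivial {R : Type u} [CommRing R] [IsDomain R] {X : Type u}
    [AddCommGroup X] [Module R X] (hX : IsDivisorialModule R X) : Nontrivial X := by
  by_contra hc
  rw [not_nontrivial_iff_subsingleton] at hc
  have h1 : HasRankOne R X := hX.2.2
  have : Subsingleton (FractionRing R ⊗[R] X) := inferInstance
  rw [HasRankOne, Module.finrank_zero_of_subsingleton] at h1
  exact zero_ne_one h1

variable {R : Type u} [CommRing R] [IsDomain R] [IsNoetherianRing R] [IsIntegrallyClosed R]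
  [IsLocalRing R] {Cl : Type u} [AddCommGroup Cl] (hCl : DivisorClassGroupData R Cl)

include hCl in
theorem cl_mem_of_retract {X : Type u} [AddCommGroup X] [Module R X]
    (hX : IsDivisorialModule R X) {ι : Type} [Fintype ι] {N : ι → Type u}
    [∀ j, AddCommGroup (N j)] [∀ j, Module R (N j)] (hN : ∀ j, IsDivisorialModule R (N j))
    (i : X →ₗ[R] ∀ j, N j) (r : (∀ j, N j) →ₗ[R] X) (h : ∀ x, r (i x) = x) :
    ∃ j, hCl.cl (ModuleCat.of R X) = hCl.cl (ModuleCat.of R (N j)) := by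
  have := hX.nontrivial
  have : ∀ j, IsTorsionFree R (N j) := fun j =>
    have := (hN j).2.1
    inferInstance
  obtain ⟨j, ⟨e⟩⟩ := exists_equiv_of_retract hX.end_scalar (fun j => (hN j).end_scalar) i r h
  exact ⟨j, cl_eq_of_equiv hCl hX e⟩

theorem cl_mem_of_memAdd {X : Type u} [AddCommGroup X] [Module R X]
    (hX : IsDivisorialModule R X) {ι : Type} [Fintype ι] {N : ι → Type u}
    [∀ j, AddCommGroup (N j)] [∀ j, Module R (N j)] (hN : ∀ j, IsDivisorialModule R (N j))
    (h : MemAdd R (∀ j, N j) X) :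
    ∃ j, hCl.cl (ModuleCat.of R X) = hCl.cl (ModuleCat.of R (N j)) := by
  obtain ⟨k, i, r, hir⟩ := h.exists_retract
  obtain ⟨p, hp⟩ := cl_mem_of_retract hCl hX (ι := Fin k × ι) (N := fun p => N p.2)
    (fun p => hN p.2)
    (LinearMap.pi fun p => LinearMap.proj p.2 ∘ₗ
      (LinearMap.proj p.1 : (Fin k → ∀ j, N j) →ₗ[R] ∀ j, N j) ∘ₗ i)
    (r ∘ₗ LinearMap.pi fun a => LinearMap.pi fun j =>
      (LinearMap.proj (a, j) : (∀ p : Fin k × ι, N p.2) →ₗ[R] N j)) hir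
  exact ⟨p.2, hp⟩

variable {m : ℕ} {M : Fin m → Type u} [∀ i, AddCommGroup (M i)] [∀ i, Module R (M i)]
  (hM : ∀ i, IsDivisorialModule R (M i))

include hM

/-- If `Hom(X, ⊕ M j)` lies in `add (⊕ N k)`, then the class of each `Hom(X, M j)` is the class of
some `N k`, since an indecomposable summand of `⊕ N k` is one of the `N k`. -/
theorem hom_summand_class {X : Type u} [AddCommGroup X] [Module R X]
    (hX : IsDivisorialModule R X) {N : Fin m → Type u} [∀ j, AddCommGroup (N j)]
    [∀ j, Module R (N j)] (hN : ∀ j, IsDivisorialModule R (N j))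
    (h : MemAdd R (∀ j, N j) (X →ₗ[R] ∀ j, M j)) (j : Fin m) :
    ∃ k, hCl.cl (ModuleCat.of R (N k)) =
      hCl.cl (ModuleCat.of R (M j)) - hCl.cl (ModuleCat.of R X) := by
  have h1 := hX.hom hCl (hM j)
  have h2 : MemAdd R (∀ j, N j) (X →ₗ[R] M j) :=
    h.retract (LinearMap.llcomp R X (M j) (∀ j, M j) (LinearMap.single R M j))
      (LinearMap.llcomp R X (∀ j, M j) (M j) (LinearMap.proj j)) (fun φ => by ext x; simp)
  obtain ⟨k, hk⟩ := cl_mem_of_memAdd hCl h1.1 hN h2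
  exact ⟨k, by rw [← hk, h1.2]⟩

theorem hom_class_of_memAdd (i : Fin m) (h : MemAdd R (∀ j, M j) (M i →ₗ[R] ∀ j, M j))
    (j : Fin m) : ∃ k, hCl.cl (ModuleCat.of R (M k)) =
      hCl.cl (ModuleCat.of R (M j)) - hCl.cl (ModuleCat.of R (M i)) :=
  hom_summand_class hCl hM (hM i) hM h j

theorem hom_class_of_memAdd_dual (i : Fin m)
    (h : MemAdd R (Module.Dual R (∀ j, M j)) (M i →ₗ[R] ∀ j, M j))
    (j : Fin m) : ∃ k, -hCl.cl (ModuleCat.of R (M k)) =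
      hCl.cl (ModuleCat.of R (M j)) - hCl.cl (ModuleCat.of R (M i)) := by
  have h1 : MemAdd R (∀ j, Module.Dual R (M j)) (M i →ₗ[R] ∀ j, M j) :=
    h.of_equiv (LinearMap.lsum R M R).symm
  obtain ⟨k, hk⟩ := hom_summand_class hCl hM (hM i) (fun j => ((hM j).dual hCl).1) h1 j
  exact ⟨k, by rw [← hk, ((hM k).dual hCl).2]⟩

theorem exists_class_zero (h : IsGeneratorModule R (∀ j, M j)) :
    ∃ i, hCl.cl (ModuleCat.of R (M i)) = 0 := by
  obtain ⟨j, hj⟩ := cl_mem_of_memAdd hCl IsDivisorialModule.ring hM h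
  exact ⟨j, by rw [← hj, hCl.cl_ring]⟩

omit [IsLocalRing R] in
/-- A generator is steady when its set of classes is closed under differences: every
`Hom(M i, M j)` is then isomorphic to some `M k`. -/
theorem isSteady_of_classes (hg : IsGeneratorModule R (∀ j, M j))
    (h : ∀ i j, ∃ k, hCl.cl (ModuleCat.of R (M k)) =
      hCl.cl (ModuleCat.of R (M j)) - hCl.cl (ModuleCat.of R (M i))) :
    IsSteadyModule R (∀ j, M j) := by
  refine ⟨hg, ?_⟩
  have h1 : ∀ i j, MemAdd R (∀ j, M j) (M i →ₗ[R] M j) := by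
    intro i j
    obtain ⟨k, hk⟩ := h i j
    have h2 := (hM i).hom hCl (hM j)
    rw [← h2.2] at hk
    obtain ⟨e⟩ := (hCl.cl_eq_iff (ModuleCat.of R (M k)) (ModuleCat.of R (M i →ₗ[R] M j))
      (hM k) h2.1).1 hk
    exact (memAdd_summand M k).retract e.symm.toLinearMap e.toLinearMap (by simp)
  have h2 := MemAdd.pi fun i => MemAdd.pi fun j => h1 i j
  let e : (∀ i j, M i →ₗ[R] M j) ≃ₗ[R] Module.End R (∀ j, M j) :=
    (LinearEquiv.piCongrRight fun i => homPiEquiv (M i) M).trans (LinearMap.lsum R M R)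
  exact h2.retract e.symm.toLinearMap e.toLinearMap (by simp)

end AddClasses

section Combinatorics

/-- If the classes `s i` of a semi-steady family lie in a group without nonzero torsion, then the
family is steady unless it has exactly two members. Here `hss` is semi-steadiness and `hns` is the
failure of steadiness, both in terms of classes. -/
theorem eq_one_of_no_torsion {G : Type*} [AddCommGroup G] (ht : ∀ c : G, IsOfFinAddOrder c → c = 0)
    (n : ℕ) (s : Fin (n + 1) → G) (hs : Function.Injective s) (h0 : ∃ i, s i = 0)
    (hss : ∀ i, (∀ j, ∃ k, s k = s j - s i) ∨ (∀ j, ∃ k, -s k = s j - s i))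
    (hns : ¬ ∀ i j, ∃ k, s k = s j - s i) : n = 1 := by
  classical
  obtain ⟨z, hz⟩ := h0
  -- subtracting `s i` preserves the finite set of classes, so `s i` is torsion and vanishes
  have key : ∀ i, (∀ j, ∃ k, s k = s j - s i) → s i = 0 := by
    intro i hi
    have hmem : ∀ a : ℕ, ∃ k, s k = -(a • s i) := by
      intro a
      induction a with
      | zero => exact ⟨z, by simp [hz]⟩
      | succ a ih =>
        obtain ⟨k, hk⟩ := ih
        obtain ⟨l, hl⟩ := hi k
        exact ⟨l, by rw [hl, hk, succ_nsmul]; abel⟩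
    apply ht
    choose f hf using hmem
    obtain ⟨a, b, hab, hfab⟩ := Finite.exists_ne_map_eq_of_infinite f
    have h1 : a • s i = b • s i := by
      have := hf a
      rw [hfab, hf b] at this
      exact (neg_injective this).symm
    by_contra hc
    exact hab ((injective_nsmul_iff_not_isOfFinAddOrder.2 hc) h1)
  -- if `S - s i = -S = S - s i'` for the finite set of classes `S`, translation by `s i - s i'`
  -- preserves `S`, so this difference is torsion and vanishes
  have key2 : ∀ i i', (∀ j, ∃ k, -s k = s j - s i) → (∀ j, ∃ k, -s k = s j - s i') → s i = s i' := by
    intro i i' hi hi'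
    choose f hf using hi
    choose g hg using hi'
    have hfi : Function.Injective f := fun a b hab => hs (by
      have h1 := hf a
      have h2 := hf b
      rw [hab, h2] at h1
      exact (sub_left_injective h1).symm)
    have hfs := Finite.injective_iff_surjective.1 hfi
    have hmem : ∀ j, ∃ k, s k = s j + (s i - s i') := by
      intro j
      obtain ⟨k, hk⟩ := hfs (g j)
      refine ⟨k, ?_⟩
      have h1 := hf k
      rw [hk, hg j] at h1
      rw [eq_comm, sub_eq_iff_eq_add] at h1
      rw [h1]; abel
    have hmem : ∀ a : ℕ, ∃ k, s k = a • (s i - s i') := by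
      intro a
      induction a with
      | zero => exact ⟨z, by simp [hz]⟩
      | succ a ih =>
        obtain ⟨k, hk⟩ := ih
        obtain ⟨l, hl⟩ := hmem k
        exact ⟨l, by rw [hl, hk, succ_nsmul]⟩
    rw [← sub_eq_zero]
    apply ht
    choose f hf using hmem
    obtain ⟨a, b, hab, hfab⟩ := Finite.exists_ne_map_eq_of_infinite f
    by_contra hc
    exact hab ((injective_nsmul_iff_not_isOfFinAddOrder.2 hc) (by
      change a • (s i - s i') = b • (s i - s i')
      rw [← hf a, hfab, hf b]))
  push Not at hns
  obtain ⟨w, j0, hw⟩ := hns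
  have hw2 : ∀ j, ∃ k, -s k = s j - s w := (hss w).resolve_left fun h => by
    obtain ⟨k, hk⟩ := h j0
    exact hw k hk
  have hzw : z ≠ w := by
    rintro rfl
    exact hw j0 (by rw [hz, sub_zero])
  have hall : ∀ i, i = z ∨ i = w := by
    intro i
    rcases hss i with h | h
    · left; exact hs ((key i h).trans hz.symm)
    · right; exact hs (key2 i w h hw2)
  have hcard : n + 1 = 2 := by
    rw [← Fintype.card_fin (n + 1), ← Finset.card_univ, ← Finset.card_pair hzw]
    congr 1
    ext i
    simpa using hall i
  omega

end Combinatorics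

/-! ### Valuation rings over a normal domain -/

section Valuation

variable {R : Type u} [CommRing R] [IsDomain R] [IsNoetherianRing R] [IsIntegrallyClosed R]
  {K : Type u} [Field K] [Algebra R K] [IsFractionRing R K]

/-- A Noetherian normal domain is an intersection of valuation rings that are localizations: an
element `z` of the fraction field outside `R` is outside a valuation ring `V ⊇ R` all of whose
elements have a denominator in `R` that is a unit of `V`. -/
theorem exists_valuationSubring {z : K} (hz : ∀ r : R, algebraMap R K r ≠ z) :
    ∃ V : ValuationSubring K, (∀ r : R, algebraMap R K r ∈ V) ∧ z ∉ V ∧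
      ∀ x ∈ V, ∃ t : R, t ≠ 0 ∧ (algebraMap R K t)⁻¹ ∈ V ∧
        ∃ r : R, algebraMap R K r = algebraMap R K t * x := by
  have hinj : Function.Injective (algebraMap R K) := IsFractionRing.injective R K
  let J : K → Ideal R := fun w =>
    { carrier := {t | ∃ a : R, algebraMap R K a = algebraMap R K t * w}
      add_mem' := by
        rintro t t' ⟨a, ha⟩ ⟨b, hb⟩
        exact ⟨a + b, by rw [map_add, map_add, ha, hb, add_mul]⟩
      zero_mem' := ⟨0, by simp⟩
      smul_mem' := by
        rintro c t ⟨a, ha⟩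
        exact ⟨c * a, by rw [smul_eq_mul, map_mul, map_mul, ha, mul_assoc]⟩ }
  -- `p` is an associated prime of `K / R` below the annihilator of the class of `z`
  obtain ⟨p, ⟨r, hr, rfl⟩, hmax⟩ := set_has_maximal_iff_noetherian.2 (inferInstance : IsNoetherian R R)
    {I : Ideal R | ∃ r : R, (∀ a : R, algebraMap R K a ≠ algebraMap R K r * z) ∧
      I = J (algebraMap R K r * z)} ⟨_, 1, by simpa using hz, rfl⟩
  set w := algebraMap R K r * z with hw
  have hprime : (J w).IsPrime := by
    refine ⟨?_, ?_⟩
    · rw [Ideal.ne_top_iff_one]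
      rintro ⟨a, ha⟩
      rw [map_one, one_mul] at ha
      exact hr a ha
    · rintro a b ⟨c, hc⟩
      by_contra hab
      push Not at hab
      obtain ⟨ha, hb⟩ := hab
      refine hmax (J (algebraMap R K (a * r) * z)) ⟨a * r, ?_, rfl⟩ ?_
      · intro e he
        exact ha ⟨e, by rw [he, map_mul, mul_assoc]⟩
      · refine lt_of_le_of_ne ?_ ?_
        · rintro t ⟨e, he⟩
          exact ⟨a * e, by rw [map_mul, he, map_mul, hw]; ring⟩
        · intro h
          apply hb
          rw [h]
          exact ⟨c, by rw [hc, map_mul, map_mul, hw]; ring⟩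
  obtain ⟨d0, d, hd, hdw⟩ := IsFractionRing.div_surjective (A := R) w
  have hd0 : algebraMap R K d ≠ 0 := (map_ne_zero_iff _ hinj).2 (nonZeroDivisors.ne_zero hd)
  have hdJ : d ∈ J w := ⟨d0, by rw [← hdw]; field_simp⟩
  have hw0 : w ≠ 0 := fun h => hr 0 (by rw [map_zero, h])
  -- if `w p ⊆ p`, then `w` would be integral over `R`, hence in `R`
  have hq : ∃ q ∈ J w, ∃ s ∉ J w, algebraMap R K s = algebraMap R K q * w := by
    by_contra hc
    push Not at hc
    let N : Submodule R K := Submodule.map (Algebra.linearMap R K) (J w)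
    have hN : N ≠ ⊥ := by
      rw [Ne, Submodule.eq_bot_iff]
      push Not
      exact ⟨_, ⟨d, hdJ, rfl⟩, hd0⟩
    have hint : IsIntegral R w := by
      refine isIntegral_of_smul_mem_submodule (A := K) (M := K) N hN
        ((IsNoetherian.noetherian (J w)).map _) w ?_
      rintro _ ⟨q, hq, rfl⟩
      obtain ⟨s, hs⟩ := id hq
      have : s ∈ J w := by
        by_contra hs'
        exact hc q hq s hs' hs
      refine ⟨s, this, ?_⟩
      rw [Algebra.linearMap_apply, hs, Algebra.linearMap_apply, smul_eq_mul, mul_comm]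
    obtain ⟨a, ha⟩ := IsIntegrallyClosed.isIntegral_iff.1 hint
    exact hr a ha
  obtain ⟨q, hq, s, hs, hsq⟩ := hq
  have hS : (J w).primeCompl ≤ nonZeroDivisors R := Ideal.primeCompl_le_nonZeroDivisors _
  let O := Localization.subalgebra.ofField K (J w).primeCompl hS
  have hO : ∀ x, x ∈ O ↔ ∃ a t : R, ∃ _ : t ∈ (J w).primeCompl,
    x = algebraMap R K a * (algebraMap R K t)⁻¹ := fun x => Iff.rfl
  have : IsLocalization.AtPrime O (J w) :=
    Localization.subalgebra.isLocalization_ofField K (J w).primeCompl hS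
  have : IsLocalRing O := IsLocalization.AtPrime.isLocalRing O (J w)
  have : IsNoetherianRing O := IsLocalization.isNoetherianRing (J w).primeCompl O inferInstance
  -- `w q = s` is a unit of `O`, so the maximal ideal `p O` is generated by `q`
  have hprin : (IsLocalRing.maximalIdeal O).IsPrincipal := by
    rw [← IsLocalization.AtPrime.map_eq_maximalIdeal (J w) O]
    refine ⟨⟨algebraMap R O q, le_antisymm ?_ ?_⟩⟩
    · rw [Ideal.map_le_iff_le_comap]
      intro x hx
      rw [Ideal.mem_comap]
      have hx' := hx
      obtain ⟨a, ha⟩ := hx'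
      have h1 : x * s = a * q := hinj (by rw [map_mul, map_mul, ha, hsq]; ring)
      have h2 : IsUnit (algebraMap R O s) := IsLocalization.map_units O (⟨s, hs⟩ : (J w).primeCompl)
      obtain ⟨v, hv⟩ := h2.exists_right_inv
      rw [Ideal.submodule_span_eq, Ideal.mem_span_singleton']
      refine ⟨algebraMap R O a * v, ?_⟩
      have h3 : algebraMap R O x * algebraMap R O s = algebraMap R O a * algebraMap R O q := by
        rw [← map_mul, h1, map_mul]
      calc _ = (algebraMap R O a * algebraMap R O q) * v := by ring
        _ = algebraMap R O x * (algebraMap R O s * v) := by rw [← h3]; ring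
        _ = _ := by rw [hv, mul_one]
    · rw [Ideal.submodule_span_eq, Ideal.span_singleton_le_iff_mem]
      exact Ideal.mem_map_of_mem _ hq
  have hval : ValuationRing O :=
    ((tfae_of_isNoetherianRing_of_isLocalRing_of_isDomain O).out 1 4).2 hprin
  let V : ValuationSubring K :=
    { O.toSubring with
      mem_or_inv_mem' := fun x => by
        rcases (ValuationRing.iff_isInteger_or_isInteger O K).1 hval x with ⟨y, hy⟩ | ⟨y, hy⟩
        · left; rw [← hy]; exact y.2
        · right; rw [← hy]; exact y.2 }
  have hV : ∀ x, x ∈ V ↔ ∃ a t : R, ∃ _ : t ∈ (J w).primeCompl,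
    x = algebraMap R K a * (algebraMap R K t)⁻¹ := fun x => Iff.rfl
  have hne : ∀ t ∈ (J w).primeCompl, algebraMap R K t ≠ 0 := fun t ht =>
    (map_ne_zero_iff _ hinj).2 (nonZeroDivisors.ne_zero (hS ht))
  refine ⟨V, fun r => O.algebraMap_mem r, ?_, ?_⟩
  · intro h
    obtain ⟨a, t, ht, hat⟩ := (hV z).1 h
    have := hne t ht
    refine ht ⟨r * a, ?_⟩
    rw [hw, hat, map_mul]
    field_simp
  · intro x hx
    obtain ⟨a, t, ht, rfl⟩ := (hV x).1 hx
    have h0 := hne t ht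
    refine ⟨t, fun h => h0 (by rw [h, map_zero]), (hV _).2 ⟨1, t, ht, by simp⟩, a, ?_⟩
    field_simp

end Valuation

/-! ### Lattices and the ideal of maximal minors -/

section Lattice

set_option linter.unusedSectionVars false

variable {R : Type u} [CommRing R] [IsDomain R]

/-- `f` embeds `E` as a lattice in the `K`-vector space `K^ι`, i.e. exhibits `K^ι` as the
localization of the torsion-free module `E` at the nonzero elements of `R`. -/
structure IsLatticeMap {K : Type u} [Field K] [Algebra R K] {E : Type u} [AddCommGroup E]
    [Module R E] {ι : Type} (f : E →ₗ[R] (ι → K)) : Prop where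
  inj : Function.Injective f
  surj : ∀ v : ι → K, ∃ t : R, t ≠ 0 ∧ ∃ e : E, f e = t • v

/-- The `R`-submodule of `K` generated by the maximal minors of a lattice map. -/
def detIdeal {K : Type u} [Field K] [Algebra R K] {E : Type u} [AddCommGroup E]
    [Module R E] {ι : Type} [Fintype ι] [DecidableEq ι] (f : E →ₗ[R] (ι → K)) : Submodule R K :=
  Submodule.span R (Set.range fun v : ι → E => (Matrix.of fun i => f (v i)).det)

variable {K : Type u} [Field K] [Algebra R K] {E : Type u} [AddCommGroup E] [Module R E]

theorem det_mem_detIdeal {ι : Type} [Fintype ι] [DecidableEq ι] (f : E →ₗ[R] (ι → K))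
    (v : ι → E) : (Matrix.of fun i => f (v i)).det ∈ detIdeal f :=
  Submodule.subset_span ⟨v, rfl⟩

theorem detIdeal_fg [IsNoetherianRing R] [Module.Finite R E] {ι : Type} [Fintype ι]
    [DecidableEq ι] (f : E →ₗ[R] (ι → K)) : (detIdeal f).FG := by
  -- the minors lie in a power of the ideal generated by the matrix entries
  let I : Submodule R K := ⨆ i, LinearMap.range (LinearMap.proj i ∘ₗ f)
  have hI : I.FG := Submodule.fg_iSup _ fun i => by
    rw [LinearMap.range_eq_map]; exact Module.Finite.fg_top.map _
  have hmem : ∀ e i, f e i ∈ I := fun e i =>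
    Submodule.mem_iSup_of_mem i ⟨e, rfl⟩
  have hprod : ∀ (s : Finset ι) (a : ι → K), (∀ i, a i ∈ I) → ∏ i ∈ s, a i ∈ I ^ s.card := by
    intro s a ha
    classical
    induction s using Finset.induction_on with
    | empty => exact Submodule.mem_one.2 ⟨1, map_one _⟩
    | insert i s hi ih =>
      rw [Finset.prod_insert hi, Finset.card_insert_of_notMem hi, pow_succ']
      exact Submodule.mul_mem_mul (ha i) ih
  have hle : detIdeal f ≤ I ^ (Finset.univ : Finset ι).card := by
    rw [detIdeal, Submodule.span_le]
    rintro _ ⟨v, rfl⟩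
    change Matrix.det _ ∈ _
    rw [Matrix.det_apply]
    refine Submodule.sum_mem _ fun σ _ => ?_
    rw [Units.smul_def]
    refine zsmul_mem (hprod _ _ fun i => ?_) _
    exact hmem _ _
  exact Submodule.FG.of_le (hI.pow _) hle

variable [IsFractionRing R K]

theorem algebraMap_ne {t : R} (ht : t ≠ 0) : algebraMap R K t ≠ 0 :=
  (map_ne_zero_iff _ (IsFractionRing.injective R K)).2 ht

theorem detIdeal_ne_bot {ι : Type} [Fintype ι] [DecidableEq ι] {f : E →ₗ[R] (ι → K)}
    (hf : IsLatticeMap f) : detIdeal f ≠ ⊥ := by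
  choose t ht e he using fun i : ι => hf.surj (Pi.single i 1)
  intro h
  have h1 := det_mem_detIdeal f e
  rw [h, Submodule.mem_bot] at h1
  have h2 : (Matrix.of fun i => f (e i)) = Matrix.diagonal fun i => algebraMap R K (t i) := by
    ext i j
    rw [Matrix.of_apply, he, Matrix.diagonal_apply, Pi.smul_apply, Pi.single_apply,
      Algebra.smul_def, mul_ite, mul_one, mul_zero]
    simp [eq_comm]
  rw [h2, Matrix.det_diagonal, Finset.prod_eq_zero_iff] at h1
  obtain ⟨i, -, hi⟩ := h1
  exact algebraMap_ne (ht i) hi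

/-- A lattice spans: maps to vector spaces extend `K`-linearly. -/
theorem IsLatticeMap.extend {ι : Type} [Finite ι] {f : E →ₗ[R] (ι → K)} (hf : IsLatticeMap f)
    {κ : Type} (h : E →ₗ[R] (κ → K)) :
    ∃ g : (ι → K) →ₗ[K] (κ → K), ∀ e, g (f e) = h e := by
  choose t ht e he using hf.surj
  have key : ∀ v (s : R), s ≠ 0 → ∀ e', f e' = s • v →
      (algebraMap R K (t v))⁻¹ • h (e v) = (algebraMap R K s)⁻¹ • h e' := by
    intro v s hs e' he'
    have h1 : s • e v = t v • e' := hf.inj (by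
      rw [map_smul, map_smul, he, he', smul_smul, smul_smul, mul_comm])
    have h2 := congrArg h h1
    rw [map_smul, map_smul] at h2
    have ht' := algebraMap_ne (K := K) (ht v)
    have hs' := algebraMap_ne (K := K) hs
    rw [← algebraMap_smul K s, ← algebraMap_smul K (t v)] at h2
    rw [inv_smul_eq_iff₀ ht', smul_comm, eq_inv_smul_iff₀ hs', h2]
  refine ⟨{ toFun := fun v => (algebraMap R K (t v))⁻¹ • h (e v), map_add' := ?_, map_smul' := ?_ },
    ?_⟩
  · intro v w
    have ht' := algebraMap_ne (K := K) (ht v)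
    have hs' := algebraMap_ne (K := K) (ht w)
    rw [key (v + w) (t v * t w) (mul_ne_zero (ht v) (ht w)) (t w • e v + t v • e w) (by
      rw [map_add, map_smul, map_smul, he, he, smul_smul, smul_smul, smul_add, mul_comm (t w)])]
    rw [map_add, map_smul, map_smul, ← algebraMap_smul K (t w), ← algebraMap_smul K (t v), smul_add,
      smul_smul, smul_smul, map_mul]
    congr 2 <;> field_simp
  · intro c v
    obtain ⟨a, b, hb, rfl⟩ := IsFractionRing.div_surjective (A := R) c
    have hb0 := nonZeroDivisors.ne_zero hb
    have ht' := algebraMap_ne (K := K) (ht v)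
    have hs' := algebraMap_ne (K := K) hb0
    rw [key _ (t v * b) (mul_ne_zero (ht v) hb0) (a • e v) (by
      rw [map_smul, he, ← algebraMap_smul K, ← algebraMap_smul K (t v), ← algebraMap_smul K (t v * b),
        smul_smul, smul_smul, map_mul]
      congr 1; field_simp)]
    rw [map_smul, ← algebraMap_smul K a, smul_smul, map_mul, RingHom.id_apply, smul_smul]
    congr 1; field_simp
  · intro x
    change (algebraMap R K (t (f x)))⁻¹ • h (e (f x)) = h x
    rw [key (f x) 1 one_ne_zero x (by rw [one_smul]), map_one, inv_one, one_smul]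

theorem IsLatticeMap.hom_ext {ι : Type} {f : E →ₗ[R] (ι → K)} (hf : IsLatticeMap f)
    {κ : Type} {g g' : (ι → K) →ₗ[K] (κ → K)} (h : ∀ e, g (f e) = g' (f e)) : g = g' := by
  ext1 v
  obtain ⟨t, ht, e, he⟩ := hf.surj v
  have h1 := h e
  rw [he, ← algebraMap_smul K, map_smul, map_smul] at h1
  exact smul_right_injective _ (algebraMap_ne ht) h1

variable (K) in
/-- Every finitely generated torsion-free module is a lattice. -/
theorem exists_latticeMap (E : Type u) [AddCommGroup E] [Module R E] [Module.Finite R E]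
    [IsTorsionFree R E] :
    ∃ (m : ℕ) (f : E →ₗ[R] (Fin m → K)), IsLatticeMap f := by
  let b := Module.finBasis K (K ⊗[R] E)
  have hloc : IsLocalizedModule (nonZeroDivisors R) (TensorProduct.mk R K E 1) :=
    (isLocalizedModule_iff_isBaseChange (nonZeroDivisors R) K _).2 (TensorProduct.isBaseChange R E K)
  refine ⟨_, (b.equivFun.toLinearMap.restrictScalars R) ∘ₗ TensorProduct.mk R K E 1, ?_, ?_⟩
  · refine b.equivFun.injective.comp ?_
    rw [← LinearMap.ker_eq_bot, LinearMap.ker_eq_bot']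
    intro x hx
    obtain ⟨c, hc⟩ := (IsLocalizedModule.eq_zero_iff (nonZeroDivisors R) _).1 hx
    exact (smul_eq_zero.1 hc).resolve_left (nonZeroDivisors.ne_zero c.2)
  · intro v
    obtain ⟨⟨x, s⟩, hx⟩ := IsLocalizedModule.surj (nonZeroDivisors R) (TensorProduct.mk R K E 1)
      (b.equivFun.symm v)
    refine ⟨s, nonZeroDivisors.ne_zero s.2, x, ?_⟩
    change b.equivFun (TensorProduct.mk R K E 1 x) = (s : R) • v
    change (s : R) • b.equivFun.symm v = _ at hx
    rw [← hx, ← algebraMap_smul K, map_smul, algebraMap_smul, LinearEquiv.apply_symm_apply]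

/-- Two lattice maps of the same module have proportional minors. -/
theorem detIdeal_eq_smul {ι κ : Type} [Fintype ι] [DecidableEq ι] [Fintype κ] [DecidableEq κ]
    {f : E →ₗ[R] (ι → K)} (hf : IsLatticeMap f) {f' : E →ₗ[R] (κ → K)} (hf' : IsLatticeMap f') :
    ∃ d : K, d ≠ 0 ∧ detIdeal f' = Submodule.span R {d} * detIdeal f := by
  obtain ⟨g, hg⟩ := hf.extend f'
  obtain ⟨g', hg'⟩ := hf'.extend f
  have h1 : g' ∘ₗ g = LinearMap.id := hf.hom_ext fun e => by
    rw [LinearMap.comp_apply, hg, hg', LinearMap.id_apply]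
  have h2 : g ∘ₗ g' = LinearMap.id := hf'.hom_ext fun e => by
    rw [LinearMap.comp_apply, hg', hg, LinearMap.id_apply]
  let G : (ι → K) ≃ₗ[K] (κ → K) := LinearEquiv.ofLinearMap g g' h2 h1
  have hcard : Fintype.card ι = Fintype.card κ := by
    have := LinearEquiv.finrank_eq G
    rwa [Module.finrank_fintype_fun_eq_card, Module.finrank_fintype_fun_eq_card] at this
  let ε : ι ≃ κ := Fintype.equivOfCardEq hcard
  let H : (ι → K) ≃ₗ[K] (ι → K) := G.trans (LinearEquiv.funCongrLeft K K ε)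
  have hH : ∀ e i, H (f e) i = f' e (ε i) := fun e i => by
    change g (f e) (ε i) = _
    rw [hg]
  let A := LinearMap.toMatrix' H.toLinearMap
  have hdet : ∀ v : κ → E, (Matrix.of fun i => f' (v i)).det =
      A.det * (Matrix.of fun i => f (v (ε i))).det := by
    intro v
    rw [← Matrix.det_transpose A, mul_comm, ← Matrix.det_mul, ← Matrix.det_submatrix_equiv_self ε]
    congr 1
    ext i j
    rw [Matrix.submatrix_apply, Matrix.of_apply, ← hH]
    have h3 : A.mulVec (f (v (ε i))) = H (f (v (ε i))) := LinearMap.toMatrix'_mulVec _ _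
    rw [← h3]
    simp only [Matrix.mulVec, Matrix.mul_apply, dotProduct, Matrix.of_apply, Matrix.transpose_apply]
    exact Finset.sum_congr rfl fun _ _ => mul_comm _ _
  have hA : A.det ≠ 0 := by
    rw [LinearMap.det_toMatrix']
    exact (LinearEquiv.isUnit_det' H).ne_zero
  refine ⟨A.det, hA, ?_⟩
  rw [detIdeal, detIdeal, Submodule.span_mul_span]
  congr 1
  ext x
  rw [Set.singleton_mul, Set.mem_image]
  constructor
  · rintro ⟨v, rfl⟩
    exact ⟨_, ⟨fun i => v (ε i), rfl⟩, (hdet v).symm⟩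
  · rintro ⟨_, ⟨v, rfl⟩, rfl⟩
    refine ⟨fun k => v (ε.symm k), ?_⟩
    change Matrix.det _ = _
    rw [hdet]
    simp

end Lattice

/-! ### The first Chern class -/

section Additivity

set_option linter.unusedSectionVars false

variable {R : Type u} [CommRing R] [IsDomain R] [IsNoetherianRing R]
  {K : Type u} [Field K] [Algebra R K] [IsFractionRing R K]

/-- Some nonzero element `t` of a finite set has largest valuation: `x / t ∈ V` for all `x` in the
set. -/
theorem exists_max_valuation (V : ValuationSubring K) (T : Finset K) (hT : ∃ x ∈ T, x ≠ 0) :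
    ∃ t ∈ T, t ≠ 0 ∧ ∀ x ∈ T, x / t ∈ V := by
  obtain ⟨x₀, hx₀, hne⟩ := hT
  obtain ⟨t, ht, hmax⟩ := T.exists_max_image V.valuation ⟨x₀, hx₀⟩
  have ht0 : t ≠ 0 := by
    rintro rfl
    have := hmax x₀ hx₀
    rw [map_zero, le_zero_iff, map_eq_zero] at this
    exact hne this
  refine ⟨t, ht, ht0, fun x hx => ?_⟩
  rw [← V.valuation_le_one_iff, map_div₀]
  exact div_le_one_of_le₀ (hmax x hx) zero_le

/-- Over a valuation ring `V ⊇ R` the lattice `V f(E)` is free: choosing a minor of largest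
valuation gives elements of `E` whose images form a `V`-basis, by Cramer's rule. -/
theorem IsLatticeMap.exists_basis {E : Type u} [AddCommGroup E] [Module R E] [Module.Finite R E]
    {ι : Type} [Fintype ι] [DecidableEq ι] {f : E →ₗ[R] (ι → K)} (hf : IsLatticeMap f)
    (V : ValuationSubring K) (hV : ∀ r : R, algebraMap R K r ∈ V) :
    ∃ a : ι → E, ∀ e, ∃ c : ι → K, (∀ i, c i ∈ V) ∧ f e = ∑ i, c i • f (a i) := by
  obtain ⟨T, hT, hspan⟩ := (Submodule.fg_span_iff_fg_span_finset_subset _).1 (detIdeal_fg f)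
  have hT0 : ∃ x ∈ T, x ≠ 0 := by
    by_contra hc
    push Not at hc
    refine detIdeal_ne_bot hf ?_
    rw [detIdeal, hspan, Submodule.span_eq_bot]
    exact hc
  obtain ⟨d, hd, hd0, hmax⟩ := exists_max_valuation V T hT0
  obtain ⟨a, ha⟩ := hT hd
  have hall : ∀ v : ι → E, (Matrix.of fun i => f (v i)).det / d ∈ V := by
    intro v
    have h1 := det_mem_detIdeal f v
    rw [detIdeal, hspan] at h1
    generalize (Matrix.of fun i => f (v i)).det = z at h1 ⊢
    induction h1 using Submodule.span_induction with
    | mem x hx => exact hmax x hx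
    | zero => rw [zero_div]; exact V.zero_mem
    | add x y _ _ hx hy => rw [add_div]; exact V.add_mem _ _ hx hy
    | smul r x _ hx =>
      rw [Algebra.smul_def, mul_div_assoc]
      exact V.mul_mem _ _ (hV r) hx
  refine ⟨a, fun e => ⟨fun i => (Matrix.of fun j => f (Function.update a i e j)).det / d,
    fun i => hall _, ?_⟩⟩
  set A : Matrix ι ι K := Matrix.of fun i => f (a i) with hA
  have hdet : A.det = d := ha
  have hcr : ∀ i, Matrix.cramer A.transpose (f e) i =
      (Matrix.of fun j => f (Function.update a i e j)).det := by
    intro i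
    rw [Matrix.cramer_transpose_apply]
    congr 1
    ext j k
    rw [Matrix.updateRow_apply, Matrix.of_apply, Function.update_apply]
    split_ifs <;> rfl
  have h2 := Matrix.mulVec_cramer A.transpose (f e)
  rw [Matrix.det_transpose, hdet] at h2
  have h3 : f e = d⁻¹ • A.transpose.mulVec (Matrix.cramer A.transpose (f e)) := by
    rw [h2, smul_smul, inv_mul_cancel₀ hd0, one_smul]
  rw [h3]
  ext k
  simp only [Pi.smul_apply, Matrix.mulVec, dotProduct, Matrix.transpose_apply, Finset.sum_apply,
    smul_eq_mul, Finset.mul_sum, hcr]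
  refine Finset.sum_congr rfl fun i _ => ?_
  rw [hA, Matrix.of_apply]
  ring

variable {A B C : Type u} [AddCommGroup A] [Module R A] [AddCommGroup B] [Module R B]
  [AddCommGroup C] [Module R C] {α : A →ₗ[R] B} {γ : B →ₗ[R] C} {ι κ : Type}

/-- Lattice maps for the outer terms of a short exact sequence extend to one for the middle
term. -/
theorem exists_latticeMap_extension [Finite ι] [Finite κ] [Module.Finite R B] [IsTorsionFree R B]
    (hα : Function.Injective α) (hγ : Function.Surjective γ) (hex : Function.Exact α γ)
    {f : A →ₗ[R] (ι → K)} (hf : IsLatticeMap f) {h : C →ₗ[R] (κ → K)} (hh : IsLatticeMap h) :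
    ∃ g : B →ₗ[R] (ι ⊕ κ → K), IsLatticeMap g ∧ (∀ a, g (α a) = Sum.elim (f a) 0) ∧
      ∀ b k, g b (Sum.inr k) = h (γ b) k := by
  obtain ⟨m, b, hb⟩ := exists_latticeMap (R := R) K B
  obtain ⟨φ, hφ⟩ := hf.extend (b ∘ₗ α)
  have hφi : LinearMap.ker φ = ⊥ := by
    rw [LinearMap.ker_eq_bot']
    intro v hv
    obtain ⟨t, ht, a, ha⟩ := hf.surj v
    have h1 := hφ a
    rw [ha, ← algebraMap_smul K, map_smul, hv, smul_zero] at h1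
    have h2 : a = 0 := hα (hb.inj (by
      rw [map_zero, map_zero]; exact h1.symm))
    rw [h2, map_zero, ← algebraMap_smul K] at ha
    exact (smul_eq_zero.1 ha.symm).resolve_left (algebraMap_ne ht)
  obtain ⟨ρ, hρ⟩ := φ.exists_leftInverse_of_injective hφi
  let g : B →ₗ[R] (ι ⊕ κ → K) := LinearMap.pi (Sum.rec
    (fun i => LinearMap.proj i ∘ₗ ρ.restrictScalars R ∘ₗ b) (fun k => LinearMap.proj k ∘ₗ h ∘ₗ γ))
  have hg : ∀ x, g x = Sum.elim (ρ (b x)) (h (γ x)) := fun x => by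
    ext i; rcases i with i | k <;> rfl
  have hρb : ∀ a, ρ (b (α a)) = f a := fun a => by
    rw [show b (α a) = φ (f a) from (hφ a).symm]
    exact LinearMap.congr_fun hρ (f a)
  have hgα : ∀ a, g (α a) = Sum.elim (f a) 0 := fun a => by
    rw [hg, hρb, hex.apply_apply_eq_zero, map_zero]
  refine ⟨g, ⟨?_, ?_⟩, hgα, fun x k => rfl⟩
  · rw [← LinearMap.ker_eq_bot, LinearMap.ker_eq_bot']
    intro x hx
    rw [hg] at hx
    have h1 : γ x = 0 := hh.inj (by
      rw [map_zero]; funext k; exact congrFun hx (Sum.inr k))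
    obtain ⟨a, rfl⟩ := (hex x).1 h1
    have h2 : a = 0 := hf.inj (by
      rw [map_zero, ← hρb]; funext i; exact congrFun hx (Sum.inl i))
    rw [h2, map_zero]
  · intro v
    obtain ⟨t, ht, c, hc⟩ := hh.surj fun k => v (Sum.inr k)
    obtain ⟨x, rfl⟩ := hγ c
    obtain ⟨s, hs, a, ha⟩ := hf.surj fun i => t • v (Sum.inl i) - g x (Sum.inl i)
    refine ⟨s * t, mul_ne_zero hs ht, s • x + α a, ?_⟩
    rw [map_add, map_smul, hgα, ha]
    ext i
    rcases i with i | k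
    · simp [smul_sub, mul_smul]
    · have h3 : g x (Sum.inr k) = t • v (Sum.inr k) := congrFun hc k
      simp [h3, mul_smul]

/-- In a short exact sequence of lattices the ideals of minors multiply up to divisorial hull.
The inclusion `D(A) D(C) ⊆ D(B)` is a block determinant; the other one is checked on discrete
valuation rings, where the lattices become free. -/
theorem inv_detIdeal_extension [IsIntegrallyClosed R] [Fintype ι] [Fintype κ] [DecidableEq ι]
    [DecidableEq κ] [Module.Finite R A] [Module.Finite R C]
    (hγ : Function.Surjective γ) (hex : Function.Exact α γ)
    {f : A →ₗ[R] (ι → K)} (hf : IsLatticeMap f) {h : C →ₗ[R] (κ → K)} (hh : IsLatticeMap h)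
    {g : B →ₗ[R] (ι ⊕ κ → K)} (hgα : ∀ a, g (α a) = Sum.elim (f a) 0)
    (hgγ : ∀ b k, g b (Sum.inr k) = h (γ b) k) :
    (1 / detIdeal g : Submodule R K) = 1 / (detIdeal f * detIdeal h) := by
  have hblock : ∀ (a : ι → A) (b : κ → B),
      (Matrix.of fun j => g (Sum.elim (fun i => α (a i)) b j)).det =
      (Matrix.of fun i => f (a i)).det * (Matrix.of fun k => h (γ (b k))).det := by
    intro a b
    rw [← Matrix.det_fromBlocks_zero₁₂ _ (Matrix.of fun k i => g (b k) (Sum.inl i))]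
    congr 1
    ext j l
    rcases j with j | j <;> rcases l with l | l <;>
      simp [hgα, hgγ, hex.apply_apply_eq_zero]
  apply le_antisymm
  · apply frac_inv_anti
    rw [detIdeal, detIdeal, Submodule.span_mul_span, Submodule.span_le]
    rintro _ ⟨_, ⟨a, rfl⟩, _, ⟨c, rfl⟩, rfl⟩
    choose b hb using fun k => hγ (c k)
    change _ * _ ∈ _
    have := hblock a b
    simp only [hb] at this
    rw [SetLike.mem_coe, ← this]
    exact det_mem_detIdeal g _
  · intro y hy
    rw [Submodule.mem_div_iff_forall_mul_mem] at hy ⊢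
    suffices hv : ∀ v : ι ⊕ κ → B, y * (Matrix.of fun j => g (v j)).det ∈ (1 : Submodule R K) by
      intro z hz
      induction hz using Submodule.span_induction with
      | mem x hx => obtain ⟨v, rfl⟩ := hx; exact hv v
      | zero => rw [mul_zero]; exact Submodule.zero_mem _
      | add x y _ _ hx hy => rw [mul_add]; exact Submodule.add_mem _ hx hy
      | smul r x _ hx => rw [mul_smul_comm]; exact Submodule.smul_mem _ _ hx
    intro v
    by_contra hc
    rw [Submodule.mem_one] at hc
    push Not at hc
    obtain ⟨V, hV, hzV, hden⟩ := exists_valuationSubring hc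
    obtain ⟨a, ha⟩ := hf.exists_basis V hV
    obtain ⟨c, hc⟩ := hh.exists_basis V hV
    choose b hb using fun k => hγ (c k)
    let w : ι ⊕ κ → B := Sum.elim (fun i => α (a i)) b
    have hbasis : ∀ x : B, ∃ μ : ι ⊕ κ → K, (∀ j, μ j ∈ V) ∧ g x = ∑ j, μ j • g (w j) := by
      intro x
      obtain ⟨μ, hμV, hμ⟩ := hc (γ x)
      choose t ht htV r hr using fun k => hden (μ k) (hμV k)
      let T : R := ∏ k, t k
      have hT : T ≠ 0 := Finset.prod_ne_zero_iff.2 fun k _ => ht k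
      have hTV : (algebraMap R K T)⁻¹ ∈ V := by
        rw [map_prod, ← Finset.prod_inv_distrib]
        exact V.toSubring.prod_mem fun k _ => htV k
      have hT' := algebraMap_ne (K := K) hT
      have hs : ∀ k, ∃ s : R, algebraMap R K s = algebraMap R K T * μ k := fun k =>
        ⟨(∏ l ∈ Finset.univ.erase k, t l) * r k, by
          rw [map_mul, hr, ← mul_assoc, ← map_mul, Finset.prod_erase_mul _ _ (Finset.mem_univ k)]⟩
      choose s hs using hs
      have hker : γ (T • x - ∑ k, s k • b k) = 0 := by
        apply hh.inj
        rw [map_sub, map_smul, map_sum, map_zero, map_sub, map_smul, map_sum, hμ, Finset.smul_sum,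
          ← Finset.sum_sub_distrib]
        refine Finset.sum_eq_zero fun k _ => ?_
        rw [map_smul, hb, map_smul, ← algebraMap_smul K T, smul_smul, ← hs, algebraMap_smul, sub_self]
      obtain ⟨a', ha'⟩ := (hex _).1 hker
      obtain ⟨ν, hνV, hν⟩ := ha a'
      refine ⟨Sum.elim (fun i => (algebraMap R K T)⁻¹ * ν i) μ, ?_, ?_⟩
      · rintro (i | k)
        · exact V.mul_mem _ _ hTV (hνV i)
        · exact hμV k
      · have h1 : g (α a') = ∑ i, ν i • g (α (a i)) := by
          rw [hgα, hν]
          ext j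
          rcases j with j | j <;> simp [hgα]
        have h2 : T • g x = g (α a') + ∑ k, s k • g (b k) := by
          rw [ha', map_sub, map_smul, map_sum]
          simp only [map_smul]
          abel
        have h3 : g x = (algebraMap R K T)⁻¹ • (g (α a') + ∑ k, s k • g (b k)) := by
          rw [← h2, ← algebraMap_smul K T, smul_smul, inv_mul_cancel₀ hT', one_smul]
        rw [h3, h1, Fintype.sum_sum_type, smul_add, Finset.smul_sum, Finset.smul_sum]
        congr 1
        · refine Finset.sum_congr rfl fun i _ => ?_
          rw [smul_smul]; rfl
        · refine Finset.sum_congr rfl fun k _ => ?_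
          rw [← algebraMap_smul K (s k), smul_smul, hs, inv_mul_cancel_left₀ hT']; rfl
    choose N hNV hN using fun j => hbasis (v j)
    have hdet : (Matrix.of fun j => g (v j)).det =
        (Matrix.of N).det * (Matrix.of fun j => g (w j)).det := by
      rw [← Matrix.det_mul]
      congr 1
      ext j l
      rw [Matrix.of_apply, hN, Matrix.mul_apply, Finset.sum_apply]
      rfl
    have hNdet : (Matrix.of N).det ∈ V := by
      rw [Matrix.det_apply]
      refine V.toSubring.sum_mem fun σ _ => ?_
      rw [Units.smul_def]
      exact zsmul_mem (V.toSubring.prod_mem fun j _ => hNV _ _) _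
    obtain ⟨r, hr⟩ := Submodule.mem_one.1 (hy ((Matrix.of fun j => g (w j)).det) (by
      rw [hblock]
      exact Submodule.mul_mem_mul (det_mem_detIdeal f _) (det_mem_detIdeal h _)))
    apply hzV
    rw [hdet, mul_left_comm, ← hr]
    exact V.mul_mem _ _ hNdet (hV r)

end Additivity

section Chern

variable {R : Type u} [CommRing R] [IsDomain R] [IsNoetherianRing R] {Cl : Type u} [AddCommGroup Cl]
  (hCl : DivisorClassGroupData R Cl)

/-- The first Chern class of a finitely generated torsion-free module: the divisor class of the
ideal of maximal minors of a lattice map. -/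
noncomputable def chernClass (E : Type u) [AddCommGroup E] [Module R E] [Module.Finite R E]
    [IsTorsionFree R E] : Cl :=
  fracCl hCl (detIdeal (exists_latticeMap (R := R) (FractionRing R) E).choose_spec.choose)

/-- The first Chern class does not depend on the lattice map. -/
theorem chernClass_eq {E : Type u} [AddCommGroup E] [Module R E] [Module.Finite R E]
    [IsTorsionFree R E] {ι : Type} [Fintype ι] [DecidableEq ι] {f : E →ₗ[R] (ι → FractionRing R)}
    (hf : IsLatticeMap f) : chernClass hCl E = fracCl hCl (detIdeal f) := by
  have h := (exists_latticeMap (R := R) (FractionRing R) E).choose_spec.choose_spec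
  obtain ⟨d, hd, hdf⟩ := detIdeal_eq_smul hf h
  rw [chernClass, hdf, fracCl_mul hCl (by rwa [Ne, Submodule.span_singleton_eq_bot])
    (Submodule.fg_span_singleton d) (detIdeal_ne_bot hf) (detIdeal_fg f), fracCl_span hCl hd,
    zero_add]

/-- The first Chern class is additive on short exact sequences. -/
theorem chernClass_add [IsIntegrallyClosed R] {A B C : Type u} [AddCommGroup A] [Module R A]
    [AddCommGroup B] [Module R B] [AddCommGroup C] [Module R C]
    [Module.Finite R A] [Module.Finite R B] [Module.Finite R C]
    [IsTorsionFree R A] [IsTorsionFree R B] [IsTorsionFree R C]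
    {α : A →ₗ[R] B} {γ : B →ₗ[R] C} (hα : Function.Injective α) (hγ : Function.Surjective γ)
    (hex : Function.Exact α γ) :
    chernClass hCl B = chernClass hCl A + chernClass hCl C := by
  obtain ⟨_, f, hf⟩ := exists_latticeMap (R := R) (FractionRing R) A
  obtain ⟨_, h, hh⟩ := exists_latticeMap (R := R) (FractionRing R) C
  obtain ⟨g, hg, hgα, hgγ⟩ := exists_latticeMap_extension hα hγ hex hf hh
  rw [chernClass_eq hCl hf, chernClass_eq hCl hh, chernClass_eq hCl hg,
    ← fracCl_mul hCl (detIdeal_ne_bot hf) (detIdeal_fg f) (detIdeal_ne_bot hh) (detIdeal_fg h)]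
  exact fracCl_congr hCl (inv_detIdeal_extension hγ hex hf hh hgα hgγ)

theorem chernClass_of_subsingleton (E : Type u) [AddCommGroup E] [Module R E] [Module.Finite R E]
    [IsTorsionFree R E] [Subsingleton E] : chernClass hCl E = 0 := by
  have h : IsLatticeMap (0 : E →ₗ[R] (Empty → FractionRing R)) :=
    ⟨Function.injective_of_subsingleton _, fun v => ⟨1, one_ne_zero, 0, Subsingleton.elim _ _⟩⟩
  rw [chernClass_eq hCl h, ← fracCl_one hCl, detIdeal, Submodule.one_eq_span]
  congr 2
  ext x
  simp

theorem chernClass_of_equiv {E E' : Type u} [AddCommGroup E] [Module R E] [Module.Finite R E]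
    [IsTorsionFree R E] [AddCommGroup E'] [Module R E'] [Module.Finite R E']
    [IsTorsionFree R E'] (e : E ≃ₗ[R] E') : chernClass hCl E = chernClass hCl E' := by
  obtain ⟨_, f, hf⟩ := exists_latticeMap (R := R) (FractionRing R) E'
  have h : IsLatticeMap (f ∘ₗ e.toLinearMap) := ⟨hf.inj.comp e.injective, fun v => by
    obtain ⟨t, ht, x, hx⟩ := hf.surj v
    exact ⟨t, ht, e.symm x, by simpa using hx⟩⟩
  rw [chernClass_eq hCl h, chernClass_eq hCl hf, detIdeal, detIdeal]
  congr 2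
  ext x
  constructor
  · rintro ⟨v, rfl⟩
    exact ⟨fun i => e (v i), rfl⟩
  · rintro ⟨v, rfl⟩
    exact ⟨fun i => e.symm (v i), by simp⟩

theorem chernClass_of_isDivisorial {X : Type u} [AddCommGroup X] [Module R X] [Module.Finite R X]
    [IsTorsionFree R X] (hX : IsDivisorialModule R X) :
    chernClass hCl X = hCl.cl (ModuleCat.of R X) := by
  obtain ⟨I, hI, hfg, hI2, ⟨e⟩⟩ := hX.exists_frac
  let f : X →ₗ[R] (Unit → FractionRing R) := LinearMap.pi fun _ => I.subtype ∘ₗ e.toLinearMap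
  have hf : IsLatticeMap f := by
    refine ⟨fun x y h => e.injective (Subtype.ext (congrFun h ())), fun v => ?_⟩
    obtain ⟨a, ha⟩ := frac_ne_bot_exists hI
    obtain ⟨p, q, hq, hpq⟩ := IsFractionRing.div_surjective (A := R) (v () / (a : FractionRing R))
    have hq0 := nonZeroDivisors.ne_zero hq
    have hq1 := algebraMap_ne (K := FractionRing R) hq0
    refine ⟨q, hq0, e.symm (p • a), ?_⟩
    ext ⟨⟩
    change ((e (e.symm (p • a)) : I) : FractionRing R) = q • v ()
    rw [LinearEquiv.apply_symm_apply, Submodule.coe_smul, Algebra.smul_def, Algebra.smul_def]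
    field_simp at hpq
    rw [hpq]
  rw [chernClass_eq hCl hf, ← fracCl_eq_cl hCl hI hfg hI2 e]
  congr 1
  rw [detIdeal]
  refine le_antisymm (Submodule.span_le.2 ?_) fun x hx => Submodule.subset_span ?_
  · rintro _ ⟨v, rfl⟩
    change Matrix.det _ ∈ I
    rw [Matrix.det_unique]
    exact (e (v ())).2
  · refine ⟨fun _ => e.symm ⟨x, hx⟩, ?_⟩
    change Matrix.det _ = x
    rw [Matrix.det_unique]
    change ((e (e.symm ⟨x, hx⟩) : I) : FractionRing R) = x
    rw [LinearEquiv.apply_symm_apply]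

end Chern

/-! ### Corners of modules over the endomorphism ring -/

section Corner

/-- The corner `eY` of a `Λ`-module at an element `e` (in practice an idempotent), described as
the set of fixed points of `e`. -/
def corner (R : Type u) {Λ : Type u} [CommRing R] [Ring Λ] [Algebra R Λ] (e : Λ) (Y : Type u)
    [AddCommGroup Y] [Module R Y] [Module Λ Y] [IsScalarTower R Λ Y] : Submodule R Y where
  carrier := {y | e • y = y}
  add_mem' := fun {a b} ha hb => by
    change e • (a + b) = a + b
    rw [smul_add, show e • a = a from ha, show e • b = b from hb]
  zero_mem' := smul_zero e
  smul_mem' := fun c y hy => by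
    change e • c • y = c • y
    rw [smul_algebra_smul_comm, show e • y = y from hy]

variable {R Λ : Type u} [CommRing R] [Ring Λ] [Algebra R Λ] (e : Λ)
  {Y Z : Type u} [AddCommGroup Y] [Module R Y] [Module Λ Y] [IsScalarTower R Λ Y]
  [AddCommGroup Z] [Module R Z] [Module Λ Z] [IsScalarTower R Λ Z]

theorem mem_corner {y : Y} : y ∈ corner R e Y ↔ e • y = y := Iff.rfl

/-- The map induced on corners by a `Λ`-linear map. -/
def cornerMap (f : Y →ₗ[Λ] Z) : corner R e Y →ₗ[R] corner R e Z :=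
  (f.restrictScalars R).restrict fun y hy => by
    rw [mem_corner] at hy ⊢
    change e • f y = f y
    rw [← map_smul, hy]

@[simp] theorem cornerMap_apply (f : Y →ₗ[Λ] Z) (y : corner R e Y) :
    (cornerMap (R := R) e f y : Z) = f y := rfl

theorem cornerMap_surjective (he : e * e = e) {f : Y →ₗ[Λ] Z} (hf : Function.Surjective f) :
    Function.Surjective (cornerMap (R := R) e f) := by
  rintro ⟨z, hz⟩
  obtain ⟨y, rfl⟩ := hf z
  refine ⟨⟨e • y, by rw [mem_corner, smul_smul, he]⟩, Subtype.ext ?_⟩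
  change f (e • y) = f y
  rw [map_smul]
  exact hz

theorem cornerMap_injective {f : Y →ₗ[Λ] Z} (hf : Function.Injective f) :
    Function.Injective (cornerMap (R := R) e f) := fun _ _ h =>
  Subtype.ext (hf (congrArg Subtype.val h))

theorem cornerMap_exact {X : Type u} [AddCommGroup X] [Module R X] [Module Λ X]
    [IsScalarTower R Λ X] {f : X →ₗ[Λ] Y} {g : Y →ₗ[Λ] Z} (hf : Function.Injective f)
    (h : Function.Exact f g) :
    Function.Exact (cornerMap (R := R) e f) (cornerMap (R := R) e g) := by
  rintro ⟨y, hy⟩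
  constructor
  · intro h0
    obtain ⟨x, rfl⟩ := (h y).1 (congrArg Subtype.val h0)
    refine ⟨⟨x, hf ?_⟩, rfl⟩
    rw [map_smul]
    exact hy
  · rintro ⟨x, hx⟩
    have hx' : f x = y := congrArg Subtype.val hx
    exact Subtype.ext ((h y).2 ⟨x, hx'⟩)

end Corner

section Generation

variable {R : Type u} [CommRing R] {m : ℕ} {M : Fin m → Type u} [∀ i, AddCommGroup (M i)]
  [∀ i, Module R (M i)]

/-- The projector of `⊕ M i` onto one summand. -/
def summandProj (M : Fin m → Type u) [∀ i, AddCommGroup (M i)] [∀ i, Module R (M i)] (z : Fin m) :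
    Module.End R (∀ i, M i) := LinearMap.single R M z ∘ₗ LinearMap.proj z

theorem summandProj_mul_self (z : Fin m) :
    summandProj (R := R) M z * summandProj M z = summandProj M z := by
  ext x y : 2
  simp [summandProj]

/-- For a finitely generated projective `End(M)`-module `Y`, the corner of `Y` at the summand
`M z` is a direct summand of a finite direct sum of modules `Hom(M j, M z)`. -/
theorem corner_retract (z : Fin m) {Y : Type u} [AddCommGroup Y] [Module R Y]
    [Module (Module.End R (∀ i, M i)) Y] [IsScalarTower R (Module.End R (∀ i, M i)) Y]
    [Module.Finite (Module.End R (∀ i, M i)) Y] [Module.Projective (Module.End R (∀ i, M i)) Y] :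
    ∃ (a : ℕ) (i : corner R (summandProj (R := R) M z) Y →ₗ[R] ∀ p : Fin a × Fin m, M p.2 →ₗ[R] M z)
      (r : (∀ p : Fin a × Fin m, M p.2 →ₗ[R] M z) →ₗ[R] corner R (summandProj (R := R) M z) Y),
      ∀ y, r (i y) = y := by
  obtain ⟨a, π, hπ⟩ := Module.Finite.exists_fin' (Module.End R (∀ i, M i)) Y
  obtain ⟨s, hs⟩ := Module.projective_lifting_property π LinearMap.id hπ
  refine ⟨a, LinearMap.pi fun p =>
    (LinearMap.llcomp R (M p.2) (∀ i, M i) (M z) (LinearMap.proj z)) ∘ₗ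
    (LinearMap.lcomp R (∀ i, M i) (LinearMap.single R M p.2)) ∘ₗ
    (LinearMap.proj p.1 : (Fin a → Module.End R (∀ i, M i)) →ₗ[R] Module.End R (∀ i, M i)) ∘ₗ
    s.restrictScalars R ∘ₗ (corner R (summandProj (R := R) M z) Y).subtype,
    LinearMap.codRestrict _ (π.restrictScalars R ∘ₗ LinearMap.pi fun k =>
      (LinearMap.llcomp R (∀ i, M i) (M z) (∀ i, M i) (LinearMap.single R M z)) ∘ₗ
      (LinearMap.lsum R M R).toLinearMap ∘ₗ LinearMap.pi fun j =>
        (LinearMap.proj (k, j) : (∀ p : Fin a × Fin m, M p.2 →ₗ[R] M z) →ₗ[R] M j →ₗ[R] M z))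
      ?_, ?_⟩
  · intro φ
    rw [mem_corner]
    change _ • π _ = π _
    rw [← map_smul]
    congr 1
    ext k : 1
    ext x y : 2
    simp [summandProj]
  · rintro ⟨y, hy⟩
    rw [mem_corner] at hy
    ext1
    change π _ = y
    have key : π (summandProj (R := R) M z • s y) = y := by
      rw [map_smul, show π (s y) = y from LinearMap.congr_fun hs y, hy]
    refine Eq.trans (congrArg π ?_) key
    ext k : 1
    refine LinearMap.ext fun w => ?_
    change Pi.single z ((LinearMap.lsum R M R fun c => LinearMap.proj z ∘ₗ s y k ∘ₗ
      LinearMap.single R M c) w) = Pi.single z (s y k w z)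
    congr 1
    conv_rhs => rw [← LinearMap.sum_single_apply M w, map_sum, Finset.sum_apply]
    simp

end Generation

/-! ### Generation of the class group -/

section ChernGeneration

variable {R : Type u} [CommRing R] [IsDomain R] [IsNoetherianRing R] [IsIntegrallyClosed R]
  [IsLocalRing R] {Cl : Type u} [AddCommGroup Cl] (hCl : DivisorClassGroupData R Cl)
  (G : AddSubgroup Cl)

/-- A finitely generated torsion-free module that is a direct summand of a finite direct sum of
divisorial modules with classes in a subgroup has its first Chern class in that subgroup. -/
theorem chernClass_mem_of_retract {ι : Type} [Fintype ι] {N : ι → Type u}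
    [∀ j, AddCommGroup (N j)] [∀ j, Module R (N j)] (hN : ∀ j, IsDivisorialModule R (N j))
    (hG : ∀ j, hCl.cl (ModuleCat.of R (N j)) ∈ G)
    {E : Type u} [AddCommGroup E] [Module R E] [Module.Finite R E] [IsTorsionFree R E]
    (i : E →ₗ[R] ∀ j, N j) (r : (∀ j, N j) →ₗ[R] E) (h : ∀ x, r (i x) = x) :
    chernClass hCl E ∈ G := by
  let ε := Fintype.equivFin ι
  let c := LinearEquiv.piCongrLeft' R N ε
  let P : ModuleCat.{u} R → Prop := fun X =>
    ∃ (_ : Module.Finite R X) (_ : IsTorsionFree R X), chernClass hCl X ∈ G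
  have key : P (ModuleCat.of R E) := summand_induction P
    (fun X hX => ⟨inferInstance, inferInstance, by
      rw [chernClass_of_subsingleton]; exact G.zero_mem⟩)
    (fun X Y ⟨_, _, hX⟩ e => by
      have h1 : Module.Finite R Y := Module.Finite.equiv e
      have h2 : IsTorsionFree R Y := e.symm.injective.moduleIsTorsionFree _ (by simp)
      exact ⟨h1, h2, by rwa [← chernClass_of_equiv hCl e]⟩)
    (fun X Y ⟨_, _, hX⟩ ⟨_, _, hY⟩ => by
      have h2 : IsTorsionFree R (X × Y) := inferInstance
      refine ⟨inferInstanceAs (Module.Finite R (X × Y)), h2, ?_⟩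
      have := chernClass_add hCl (LinearMap.inl_injective (R := R) (M := X) (M₂ := Y))
        (LinearMap.snd_surjective (R := R) (M := X) (M₂ := Y)) Function.Exact.inl_snd
      change chernClass hCl (X × Y) ∈ G
      rw [this]
      exact G.add_mem hX hY)
    _ (fun k => N (ε.symm k)) (fun k => (hN _).end_scalar)
    (fun k => by
      have h1 : Module.Finite R (N (ε.symm k)) := (hN _).1
      have := (hN (ε.symm k)).2.1
      have h2 : IsTorsionFree R (N (ε.symm k)) := inferInstance
      exact ⟨h1, h2, by
        change chernClass hCl (N (ε.symm k)) ∈ G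
        rw [chernClass_of_isDivisorial hCl (hN _)]
        exact hG _⟩)
    (c.toLinearMap ∘ₗ i) (r ∘ₗ c.symm.toLinearMap) (fun x => by simp [h])
  exact key.choose_spec.choose_spec

omit [IsLocalRing R] in
/-- If the first Chern class of the corner at the idempotent `e` of every finite projective module
lies in a subgroup, so does that of every finite module of finite projective dimension. -/
theorem chernClass_corner_mem_of_projective {Λ : Type u} [Ring Λ] [Algebra R Λ]
    [Module.Finite R Λ] [IsTorsionFree R Λ] (e : Λ) (he : e * e = e)
    (base : ∀ (Y : Type u) [AddCommGroup Y] [Module R Y] [Module Λ Y] [IsScalarTower R Λ Y]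
      [Module.Finite R Y] [IsTorsionFree R Y] [Module.Finite Λ Y] [Module.Projective Λ Y],
      chernClass hCl (corner R e Y) ∈ G) (k : ℕ)
    {Y : Type u} [AddCommGroup Y] [Module R Y] [Module Λ Y]
    [IsScalarTower R Λ Y] [Module.Finite R Y] [IsTorsionFree R Y]
    (hpd : HasProjectiveDimensionLT (ModuleCat.of Λ Y) (k + 1)) :
    chernClass hCl (corner R e Y) ∈ G := by
  have hfin : Module.Finite Λ Y := Module.Finite.of_restrictScalars_finite R _ Y
  induction k generalizing Y with
  | zero =>
    rw [zero_add, ← projective_iff_hasProjectiveDimensionLT_one] at hpd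
    have : Module.Projective Λ Y := (IsProjective.iff_projective _).2 hpd
    exact base Y
  | succ k ih =>
    obtain ⟨a, π, hπ⟩ := Module.Finite.exists_fin' Λ Y
    let K := LinearMap.ker π
    have hex : Function.Exact K.subtype π := LinearMap.exact_subtype_ker_map π
    have hproj : Projective (ModuleCat.of Λ (Fin a → Λ)) :=
      (IsProjective.iff_projective _).1 inferInstance
    have hK := ((shortExact_ofHom K.subtype π K.injective_subtype hπ
      hex).hasProjectiveDimensionLT_X₃_iff k hproj).1 hpd
    have h1 : Module.Finite R K := inferInstanceAs (Module.Finite R (K.restrictScalars R))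
    have h2 : IsTorsionFree R K := inferInstanceAs (IsTorsionFree R (K.restrictScalars R))
    have h3 : Module.Finite Λ K := Module.Finite.of_restrictScalars_finite R _ K
    have hadd := chernClass_add hCl (cornerMap_injective (R := R) e K.injective_subtype)
      (cornerMap_surjective (R := R) e he hπ) (cornerMap_exact (R := R) e K.injective_subtype hex)
    have hB := base (Fin a → Λ)
    have hC := ih (Y := K) hK h3
    rw [hadd] at hB
    exact (G.add_mem_cancel_left hC).1 hB

variable {m : ℕ} {M : Fin m → Type u} [∀ i, AddCommGroup (M i)] [∀ i, Module R (M i)]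
  (hM : ∀ i, IsDivisorialModule R (M i))

include hM

omit [IsDomain R] [IsIntegrallyClosed R] [IsLocalRing R] in
theorem end_finite_torsionFree :
    Module.Finite R (Module.End R (∀ i, M i)) ∧ IsTorsionFree R (Module.End R (∀ i, M i)) := by
  have h1 : ∀ i, Module.Finite R (M i) := fun i => (hM i).1
  have h2 : ∀ i, IsTorsionFree R (M i) := fun i =>
    have := (hM i).2.1
    inferInstance
  exact ⟨inferInstance, inferInstance⟩

/-- Corners of modules of finite projective dimension over `End(⊕ M i)` have their first Chern
classes in every subgroup containing the classes of the `M i`. -/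
theorem chernClass_corner_mem (hG : ∀ i, hCl.cl (ModuleCat.of R (M i)) ∈ G) (z : Fin m) (k : ℕ)
    {Y : Type u} [AddCommGroup Y] [Module R Y] [Module (Module.End R (∀ i, M i)) Y]
    [IsScalarTower R (Module.End R (∀ i, M i)) Y] [Module.Finite R Y] [IsTorsionFree R Y]
    (hpd : HasProjectiveDimensionLT (ModuleCat.of (Module.End R (∀ i, M i)) Y) (k + 1)) :
    chernClass hCl (corner R (summandProj (R := R) M z) Y) ∈ G := by
  obtain ⟨_, _⟩ := end_finite_torsionFree hM
  refine chernClass_corner_mem_of_projective hCl G _ (summandProj_mul_self z) ?_ k hpd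
  intro Y _ _ _ _ _ _ _ _
  obtain ⟨a, i, r, h⟩ := corner_retract (R := R) (M := M) z (Y := Y)
  refine chernClass_mem_of_retract hCl G (fun p => ((hM p.2).hom hCl (hM z)).1) (fun p => ?_)
    i r h
  rw [((hM p.2).hom hCl (hM z)).2]
  exact G.sub_mem (hG _) (hG _)

end ChernGeneration

section HomCorner

/-- The corner of the `End(⊕ M i)`-module `Hom(X, ⊕ M i)` at the summand `M z` is
`Hom(X, M z)`. -/
def cornerHomEquiv {R : Type u} [CommRing R] {m : ℕ} (M : Fin m → Type u)
    [∀ i, AddCommGroup (M i)] [∀ i, Module R (M i)] (z : Fin m) (X : Type u) [AddCommGroup X]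
    [Module R X] :
    corner R (summandProj (R := R) M z) (X →ₗ[R] ∀ i, M i) ≃ₗ[R] (X →ₗ[R] M z) where
  toFun φ := LinearMap.proj z ∘ₗ φ.1
  invFun ψ := ⟨LinearMap.single R M z ∘ₗ ψ, by
    rw [mem_corner]
    ext x : 1
    change Pi.single z ((Pi.single z (ψ x) : ∀ i, M i) z) = Pi.single z (ψ x)
    rw [Pi.single_eq_same]⟩
  left_inv φ := Subtype.ext φ.2
  right_inv ψ := by
    ext x
    simp
  map_add' _ _ := rfl
  map_smul' _ _ := rfl

variable {R : Type u} [CommRing R] [IsDomain R] [IsNoetherianRing R] [IsIntegrallyClosed R]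
  [IsLocalRing R] {Cl : Type u} [AddCommGroup Cl] (hCl : DivisorClassGroupData R Cl)
  {m : ℕ} {M : Fin m → Type u} [∀ i, AddCommGroup (M i)] [∀ i, Module R (M i)]
  (hM : ∀ i, IsDivisorialModule R (M i))
  {X : Type u} [AddCommGroup X] [Module R X] (hX : IsDivisorialModule R X)

include hM hX

omit [IsIntegrallyClosed R] [IsLocalRing R] [IsDomain R] in
theorem hom_finite_torsionFree :
    Module.Finite R (X →ₗ[R] ∀ i, M i) ∧ IsTorsionFree R (X →ₗ[R] ∀ i, M i) := by
  have h0 := hX.1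
  have h1 : ∀ i, Module.Finite R (M i) := fun i => (hM i).1
  have h2 : ∀ i, IsTorsionFree R (M i) := fun i =>
    have := (hM i).2.1
    inferInstance
  exact ⟨inferInstance, inferInstance⟩

/-- When `End(⊕ M i)` has finite global dimension and some `M z` is free, the classes of the `M i`
generate the divisor class group. -/
theorem cl_mem_of_globalDim (G : AddSubgroup Cl) (hG : ∀ i, hCl.cl (ModuleCat.of R (M i)) ∈ G)
    (z : Fin m) (hz : hCl.cl (ModuleCat.of R (M z)) = 0) (d : ℕ)
    (hgl : ∀ Z : ModuleCat.{u} (Module.End R (∀ i, M i)), HasProjectiveDimensionLT Z (d + 1)) :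
    hCl.cl (ModuleCat.of R X) ∈ G := by
  obtain ⟨_, _⟩ := hom_finite_torsionFree hM hX
  have h1 := hX.hom hCl (hM z)
  have h2 : Module.Finite R (X →ₗ[R] M z) := h1.1.1
  have h3 : IsTorsionFree R (X →ₗ[R] M z) :=
    have := h1.1.2.1
    inferInstance
  have h := chernClass_corner_mem hCl G hM hG z d (Y := X →ₗ[R] ∀ i, M i) (hgl _)
  rw [chernClass_of_equiv hCl (cornerHomEquiv M z X), chernClass_of_isDivisorial hCl h1.1, h1.2,
    hz, zero_sub] at h
  exact G.neg_mem_iff.1 h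

/-- When `End(⊕ M i)` has global dimension `dim R` and all `Hom(X, M i)` are maximal
Cohen-Macaulay, `Hom(X, ⊕ M i)` is a projective `End(⊕ M i)`-module. Its corner `Hom(X, M z)` is
then isomorphic to some `Hom(M j, M z)`, so `X` has the class of `M j`. -/
theorem exists_cl_eq_of_isMCM (d : ℕ) (hd : ringKrullDim R = d)
    (hgl : ∀ Z : ModuleCat.{u} (Module.End R (∀ i, M i)), HasProjectiveDimensionLT Z (d + 1))
    (z : Fin m) (hmcm : ∀ i, IsMCM R (X →ₗ[R] M i)) :
    ∃ j, hCl.cl (ModuleCat.of R X) = hCl.cl (ModuleCat.of R (M j)) := by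
  obtain ⟨_, _⟩ := hom_finite_torsionFree hM hX
  obtain ⟨_, _⟩ := end_finite_torsionFree hM
  have hpd := pd_of_depth (R := R) (Λ := Module.End R (∀ i, M i))
    (fun x hx => (IsRegular.of_ne_zero hx).isSMulRegular) d 0
    hgl (Y := X →ₗ[R] ∀ i, M i) (fun i hi => by
      have h := subsingleton_ext_pi (ModuleCat.of R (IsLocalRing.ResidueField R)) i m
        (fun j => X →ₗ[R] M j) fun j => (hmcm j).subsingleton_ext i (by
          rw [hd]; exact_mod_cast hi)
      change Subsingleton ((Abelian.extFunctorObj (ModuleCat.of R (IsLocalRing.ResidueField R))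
        i).obj (ModuleCat.of R (∀ j, X →ₗ[R] M j))) at h
      exact (((Abelian.extFunctorObj (ModuleCat.of R (IsLocalRing.ResidueField R)) i).mapIso
        (homPiEquiv X M).toModuleIso).addCommGroupIsoToAddEquiv).symm.toEquiv.subsingleton)
  rw [zero_add, ← projective_iff_hasProjectiveDimensionLT_one] at hpd
  have hproj : Module.Projective (Module.End R (∀ i, M i)) (X →ₗ[R] ∀ i, M i) :=
    (IsProjective.iff_projective _).2 hpd
  have hfin : Module.Finite (Module.End R (∀ i, M i)) (X →ₗ[R] ∀ i, M i) :=
    Module.Finite.of_restrictScalars_finite R _ _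
  obtain ⟨a, i, r, h⟩ := corner_retract (R := R) (M := M) z (Y := X →ₗ[R] ∀ i, M i)
  obtain ⟨p, hp⟩ := cl_mem_of_retract hCl (hX.hom hCl (hM z)).1
    (fun p : Fin a × Fin m => ((hM p.2).hom hCl (hM z)).1)
    (i ∘ₗ (cornerHomEquiv M z X).symm.toLinearMap) ((cornerHomEquiv M z X).toLinearMap ∘ₗ r)
    (fun x => by simp [h])
  rw [(hX.hom hCl (hM z)).2, ((hM p.2).hom hCl (hM z)).2] at hp
  exact ⟨p.2, sub_right_injective hp⟩

end HomCorner

/-! ### Torsion in the class group -/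

/-- Let `R` be a complete Noetherian local Cohen-Macaulay normal domain
such that every rank-one reflexive `R`-module whose class in `Cl(R)` is a torsion element
is a maximal Cohen-Macaulay `R`-module, and suppose `M = ⊕_{i=0}^n M i` is a basic
`R`-module giving a semi-steady splitting NCCR of `R` that is not steady. Then `Cl(R)`
contains a nonzero torsion element if and only if `n ≠ 1`. -/
theorem classGroup_has_torsion_iff_n_ne_one
    (R : Type u) [CommRing R] [IsNoetherianRing R] [IsDomain R] [IsIntegrallyClosed R]
    [IsLocalRing R] [IsAdicComplete (IsLocalRing.maximalIdeal R) R]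
    (hCM : IsMCM R R)
    (Cl : Type u) [AddCommGroup Cl] (hCl : DivisorClassGroupData R Cl)
    (htors : ∀ N : ModuleCat.{u} R, IsDivisorialModule R ↥N →
      IsOfFinAddOrder (hCl.cl N) → IsMCM R ↥N)
    (n : ℕ) (M : Fin (n + 1) → Type u) [∀ i, AddCommGroup (M i)] [∀ i, Module R (M i)]
    (hsplit : ∀ i, IsDivisorialModule R (M i))
    (hind : ∀ i, IsIndecomposableModule R (M i))
    (hbasic : ∀ i j, i ≠ j → ¬ Nonempty (M i ≃ₗ[R] M j))
    (hNCCR : GivesNCCR R (∀ i, M i))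
    (hss : IsSemiSteadyFamily R M)
    (hnotsteady : ¬ IsSteadyModule R (∀ i, M i)) :
    (∃ c : Cl, c ≠ 0 ∧ IsOfFinAddOrder c) ↔ n ≠ 1 := by
  have hns : ¬ ∀ i j, ∃ k, hCl.cl (ModuleCat.of R (M k)) =
      hCl.cl (ModuleCat.of R (M j)) - hCl.cl (ModuleCat.of R (M i)) :=
    fun h => hnotsteady (isSteady_of_classes hCl hsplit hss.1 h)
  obtain ⟨z, hz⟩ := exists_class_zero hCl hsplit hss.1
  constructor
  · rintro ⟨c, hc0, hc⟩ rfl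
    obtain ⟨d, hd, hgl⟩ := hNCCR.2.2.2.pdLT
    -- two classes `0` and `σ`, and `σ` generates `Cl`
    obtain ⟨σ, hσ⟩ : ∃ σ : Cl, ∀ i, hCl.cl (ModuleCat.of R (M i)) ∈ AddSubgroup.zmultiples σ := by
      refine ⟨hCl.cl (ModuleCat.of R (M (1 - z))), fun i => ?_⟩
      by_cases hi : i = z
      · rw [hi, hz]
        exact zero_mem _
      · rw [show i = 1 - z from (by decide : ∀ a b : Fin 2, a ≠ b → a = 1 - b) i z hi]
        exact AddSubgroup.mem_zmultiples _
    have hgen : ∀ x : Cl, x ∈ AddSubgroup.zmultiples σ := by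
      intro x
      obtain ⟨X, hX, rfl⟩ := hCl.cl_surjective x
      exact cl_mem_of_globalDim hCl hsplit hX _ hσ z hz d hgl
    have hσt : IsOfFinAddOrder σ := by
      obtain ⟨k, rfl⟩ := AddSubgroup.mem_zmultiples_iff.1 (hgen c)
      rw [isOfFinAddOrder_iff_zsmul_eq_zero] at hc ⊢
      obtain ⟨l, hl, hlk⟩ := hc
      exact ⟨l * k, mul_ne_zero hl fun hk => hc0 (by rw [hk, zero_zsmul]), by
        rw [mul_zsmul, hlk]⟩
    have hall : ∀ x : Cl, IsOfFinAddOrder x := by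
      intro x
      obtain ⟨k, rfl⟩ := AddSubgroup.mem_zmultiples_iff.1 (hgen x)
      exact hσt.zsmul
    -- every divisorial module is maximal Cohen-Macaulay, so every class is the class of a summand
    apply hns
    intro i j
    obtain ⟨X, hX, hcl⟩ := hCl.cl_surjective
      (hCl.cl (ModuleCat.of R (M j)) - hCl.cl (ModuleCat.of R (M i)))
    obtain ⟨k, hk⟩ := exists_cl_eq_of_isMCM hCl hsplit hX d hd hgl z fun j =>
      htors (ModuleCat.of R (X →ₗ[R] M j)) (hX.hom hCl (hsplit j)).1 (hall _)
    exact ⟨k, by rw [← hcl, ← hk]⟩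
  · intro hn
    by_contra hc
    push Not at hc
    refine hn (eq_one_of_no_torsion (fun c h => ?_) n
      (fun i => hCl.cl (ModuleCat.of R (M i))) (fun i j hij => ?_) ⟨z, hz⟩ (fun i => ?_) hns)
    · by_contra h0
      exact hc c h0 h
    · by_contra hne
      exact hbasic i j hne ((hCl.cl_eq_iff _ _ (hsplit i) (hsplit j)).1 hij)
    · exact (hss.2 i).imp (hom_class_of_memAdd hCl hsplit i)
        (hom_class_of_memAdd_dual hCl hsplit i)
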